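/- Let (M,g,h·dvol_g) be a non-flat 3-dimensional isotropic solution of the vacuum weighted Einstein field equation whose Ricci operator is 2-step nilpotent. Then (M,g) is a plane wave, and there exist local coordinates (u,v,x) in which g = dv(2du − (α''(v)/α(v))·x²·dv) + dx², where h(u,v,x) = α(v) is a function of v alone with α''(v) ≠ 0. -/

import Mathlib

noncomputable section
open Matrix

/-- Points of the coordinate space `ℝⁿ`. -/
abbrev Pt (n : ℕ) := Fin n → ℝ

/-- Partial derivative `∂_i f` in the `i`-th coordinate direction. -/
def pd {n : ℕ} (i : Fin n) (f : Pt n → ℝ) (p : Pt n) : ℝ :=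
  fderiv ℝ f p (Pi.single i 1)

/-- The inverse metric `g^{ij}` of a metric `g` given as a matrix of components. -/
def ginv {n : ℕ} (g : Pt n → Fin n → Fin n → ℝ) (p : Pt n) : Matrix (Fin n) (Fin n) ℝ :=
  (Matrix.of (g p))⁻¹

/-- Christoffel symbols `Γ^k_{ij}` of the Levi-Civita connection of `g`. -/
def chr {n : ℕ} (g : Pt n → Fin n → Fin n → ℝ) (k i j : Fin n) (p : Pt n) : ℝ :=
  (1/2) * ∑ l, ginv g p k l *
    (pd i (fun q => g q l j) p + pd j (fun q => g q l i) p - pd l (fun q => g q i j) p)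

/-- Components `R_{ij}` of the Ricci tensor of `g`. -/
def RicciT {n : ℕ} (g : Pt n → Fin n → Fin n → ℝ) (i j : Fin n) (p : Pt n) : ℝ :=
  (∑ k, pd k (fun q => chr g k i j q) p) - (∑ k, pd j (fun q => chr g k i k q) p)
  + (∑ k, ∑ l, chr g k k l p * chr g l i j p) - (∑ k, ∑ l, chr g k j l p * chr g l i k p)

/-- Scalar curvature `τ = g^{ij} R_{ij}` of `g`. -/
def Scal {n : ℕ} (g : Pt n → Fin n → Fin n → ℝ) (p : Pt n) : ℝ :=
  ∑ i, ∑ j, ginv g p i j * RicciT g i j p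

/-- Components of the Hessian `Hes_f` of a function `f` with respect to `g`. -/
def Hess {n : ℕ} (g : Pt n → Fin n → Fin n → ℝ) (f : Pt n → ℝ) (i j : Fin n) (p : Pt n) : ℝ :=
  pd i (fun q => pd j f q) p - ∑ k, chr g k i j p * pd k f p

/-- Laplacian `Δf = g^{ij}(Hes_f)_{ij}`. -/
def Lap {n : ℕ} (g : Pt n → Fin n → Fin n → ℝ) (f : Pt n → ℝ) (p : Pt n) : ℝ :=
  ∑ i, ∑ j, ginv g p i j * Hess g f i j p

/-- Components of the gradient `∇f = g^{ij} ∂_j f ∂_i`. -/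
def gradV {n : ℕ} (g : Pt n → Fin n → Fin n → ℝ) (f : Pt n → ℝ) (p : Pt n) (i : Fin n) : ℝ :=
  ∑ j, ginv g p i j * pd j f p

/-- `‖∇f‖² = g(∇f,∇f) = g^{ij} ∂_i f ∂_j f`. -/
def gradNorm2 {n : ℕ} (g : Pt n → Fin n → Fin n → ℝ) (f : Pt n → ℝ) (p : Pt n) : ℝ :=
  ∑ i, ∑ j, ginv g p i j * pd i f p * pd j f p

/-- The vacuum weighted Einstein field equation
`h·ρ − Hes_h + (Δh + Λ)g = 0` at the point `p`. -/
def WEFEat {n : ℕ} (g : Pt n → Fin n → Fin n → ℝ) (h : Pt n → ℝ) (Λ : ℝ) (p : Pt n) : Prop :=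
  ∀ i j, h p * RicciT g i j p - Hess g h i j p + (Lap g h p + Λ) * g p i j = 0

/-- The Ricci operator `Ric = g^{-1}·ρ` as a matrix (column `j` lists the
components of `Ric ∂_j`). -/
def RicOpM {n : ℕ} (g : Pt n → Fin n → Fin n → ℝ) (p : Pt n) : Matrix (Fin n) (Fin n) ℝ :=
  Matrix.of fun i j => ∑ k, ginv g p i k * RicciT g k j p

/-- The `k`-th component of the covariant derivative `∇_{∂_i} V`. -/
def covD {n : ℕ} (g : Pt n → Fin n → Fin n → ℝ) (V : Pt n → Fin n → ℝ) (i k : Fin n)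
    (p : Pt n) : ℝ :=
  pd i (fun q => V q k) p + ∑ m, chr g k i m p * V p m

/-- Components `R^l_{ijk}` of the (1,3)-curvature tensor:
`R(∂_i,∂_j)∂_k = R^l_{ijk} ∂_l`. -/
def RiemUp {n : ℕ} (g : Pt n → Fin n → Fin n → ℝ) (l i j k : Fin n) (p : Pt n) : ℝ :=
  pd i (fun q => chr g l j k q) p - pd j (fun q => chr g l i k q) p
  + (∑ m, chr g l i m p * chr g m j k p) - (∑ m, chr g l j m p * chr g m i k p)

/-- The (0,4)-curvature tensor `R(∂_i,∂_j,∂_k,∂_l) = g(R(∂_i,∂_j)∂_k, ∂_l)`. -/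
def RiemLow {n : ℕ} (g : Pt n → Fin n → Fin n → ℝ) (i j k l : Fin n) (p : Pt n) : ℝ :=
  ∑ m, g p l m * RiemUp g m i j k p

/-- A symmetric matrix of Lorentzian signature `(−,+,+)`. -/
def IsLorentz3 (A : Matrix (Fin 3) (Fin 3) ℝ) : Prop :=
  A.IsSymm ∧ ∃ P : Matrix (Fin 3) (Fin 3) ℝ, IsUnit P.det ∧
    Pᵀ * A * P = Matrix.diagonal ![(-1 : ℝ), 1, 1]

/-- Jacobian matrix of a coordinate change `ψ`. -/
def jac {n : ℕ} (ψ : Pt n → Pt n) (q : Pt n) : Matrix (Fin n) (Fin n) ℝ :=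
  Matrix.of fun i j => pd j (fun r => ψ r i) q

/-- Pullback `ψ^*g` of the metric `g` under the coordinate change `ψ`. -/
def pullback {n : ℕ} (g : Pt n → Fin n → Fin n → ℝ) (ψ : Pt n → Pt n) (q : Pt n) :
    Matrix (Fin n) (Fin n) ℝ :=
  (jac ψ q)ᵀ * Matrix.of (g (ψ q)) * jac ψ q

/-- The 3-dimensional plane-wave metric `dv(2du − (α''(v)/α(v))x² dv) + dx²`
in coordinates `(u,v,x) = (q 0, q 1, q 2)`. -/
def planeWaveM (α : ℝ → ℝ) (q : Pt 3) : Matrix (Fin 3) (Fin 3) ℝ :=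
  Matrix.of fun i j =>
    if i = 0 ∧ j = 1 then 1 else if i = 1 ∧ j = 0 then 1
    else if i = 1 ∧ j = 1 then -(deriv (deriv α) (q 1) / α (q 1)) * (q 2)^2
    else if i = 2 ∧ j = 2 then 1 else 0

/-!
Write `k = ∇h`. Since `k` is lightlike, `Hes_h(k) = 0`, and the field equation together with the
nilpotency of the Ricci operator gives `h ρ = Hes_h = μ dh ⊗ dh`; in particular `∇k = μ dh ⊗ k`,
so the lightlike direction of `k` is parallel. Completing `k` to a null frame and writing Cartan's
structure equations for the dual coframe, the Ricci tensor determines the curvature (the dimension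
is three), and `dμ ∧ dh = 0` follows. Rescaling `dh` by an integrating factor gives a parallel
lightlike covector `dv`; then `h = α(v)`, and the curvature of the normal connection form is
`(α''/α)(v) dv ∧ ε`, where `ε` is the spacelike covector.

Let `K = -α''/α`. Every solution `y` of the Jacobi equation `y'' = K y` along `v` yields a closed
1-form `y'(v) ε + y(v) b`, with `b` the normal connection form. A fundamental pair of solutions
integrates to a function `x` with `dx ≡ ε` modulo `dv`, and one more closed 1-form provides `u`.
In the coordinates `(u, v, x)` the metric is `2 du dv + K x² dv² + dx²`.
-/

open scoped ContDiff Topology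

section Calculus

lemma differentiableAt_of_contDiffOn {E F : Type*} [NormedAddCommGroup E] [NormedSpace ℝ E]
    [NormedAddCommGroup F] [NormedSpace ℝ F] {f : E → F} {B : Set E} {p : E}
    (hf : ContDiffOn ℝ ∞ f B) (hB : IsOpen B) (hp : p ∈ B) : DifferentiableAt ℝ f p :=
  (hf.contDiffAt (hB.mem_nhds hp)).differentiableAt (by simp)

variable {n : ℕ} {B : Set (Pt n)} {f f' : Pt n → ℝ} {p : Pt n}

lemma contDiffOn_pd (hf : ContDiffOn ℝ ∞ f B) (hB : IsOpen B) (i : Fin n) :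
    ContDiffOn ℝ ∞ (pd i f) B :=
  ((contDiffOn_infty_iff_fderiv_of_isOpen hB).1 hf).2.clm_apply contDiffOn_const

lemma pd_congr_of_eqOn (hB : IsOpen B) (h : Set.EqOn f f' B) (hp : p ∈ B) (i : Fin n) :
    pd i f p = pd i f' p := by
  rw [pd, (h.eventuallyEq_of_mem (hB.mem_nhds hp)).fderiv_eq, pd]

lemma pd_const (c : ℝ) (i : Fin n) : pd i (fun _ => c) p = 0 := by
  simp [pd]

lemma pd_add (hf : DifferentiableAt ℝ f p) (hf' : DifferentiableAt ℝ f' p) (i : Fin n) :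
    pd i (fun q => f q + f' q) p = pd i f p + pd i f' p := by
  simp [pd, fderiv_fun_add hf hf']

lemma pd_sub (hf : DifferentiableAt ℝ f p) (hf' : DifferentiableAt ℝ f' p) (i : Fin n) :
    pd i (fun q => f q - f' q) p = pd i f p - pd i f' p := by
  simp [pd, fderiv_fun_sub hf hf']

lemma pd_mul (hf : DifferentiableAt ℝ f p) (hf' : DifferentiableAt ℝ f' p) (i : Fin n) :
    pd i (fun q => f q * f' q) p = pd i f p * f' p + f p * pd i f' p := by
  simp [pd, fderiv_fun_mul hf hf', add_comm, mul_comm]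

lemma pd_sum {ι : Type*} {s : Finset ι} {F : ι → Pt n → ℝ}
    (hF : ∀ a ∈ s, DifferentiableAt ℝ (F a) p) (i : Fin n) :
    pd i (fun q => ∑ a ∈ s, F a q) p = ∑ a ∈ s, pd i (F a) p := by
  simp [pd, fderiv_fun_sum hF]

lemma pd_comp {φ : ℝ → ℝ} (hφ : DifferentiableAt ℝ φ (f p)) (hf : DifferentiableAt ℝ f p)
    (i : Fin n) : pd i (fun q => φ (f q)) p = deriv φ (f p) * pd i f p :=
  congr($((hφ.hasDerivAt.comp_hasFDerivAt p hf.hasFDerivAt).fderiv) (Pi.single i 1))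

lemma fderiv_apply_eq_sum_pd (f : Pt n → ℝ) (p w : Pt n) :
    fderiv ℝ f p w = ∑ i, w i * pd i f p := by
  conv_lhs => rw [pi_eq_sum_univ' w]
  simp only [map_sum, map_smul, smul_eq_mul, pd]

lemma pd_comm (hf : ContDiffOn ℝ ∞ f B) (hB : IsOpen B) (hp : p ∈ B) (i j : Fin n) :
    pd i (pd j f) p = pd j (pd i f) p := by
  have hd : DifferentiableAt ℝ (fderiv ℝ f) p :=
    differentiableAt_of_contDiffOn ((contDiffOn_infty_iff_fderiv_of_isOpen hB).1 hf).2 hB hp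
  have pd_pd (i j : Fin n) :
      pd i (pd j f) p = fderiv ℝ (fderiv ℝ f) p (Pi.single i 1) (Pi.single j 1) := by
    unfold pd
    rw [fderiv_clm_apply hd (differentiableAt_const _)]
    simp
  have symm : IsSymmSndFDerivAt ℝ f p :=
    (hf.contDiffAt (hB.mem_nhds hp)).isSymmSndFDerivAt (by
      simpa using WithTop.coe_le_coe.2 (le_top (a := (2 : ℕ∞))))
  rw [pd_pd, pd_pd, symm.eq]

end Calculus

section DifferentialForms

variable {n : ℕ} {B : Set (Pt n)} {f f' : Pt n → ℝ} {θ η : Pt n → Fin n → ℝ} {p : Pt n}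

/-- The differential `df` of a function, as the field of its components `∂_i f`. Here and below a
1-form is a map sending a point to its vector of components. -/
def differential (f : Pt n → ℝ) (p : Pt n) (i : Fin n) : ℝ := pd i f p

/-- The exterior product `a ∧ b` of two covectors, as a skew-symmetric matrix. -/
def wedge (a b : Fin n → ℝ) : Matrix (Fin n) (Fin n) ℝ := vecMulVec a b - vecMulVec b a

/-- The exterior derivative of a 1-form, `(dθ)_{ij} = ∂_i θ_j - ∂_j θ_i`. -/
def extD (θ : Pt n → Fin n → ℝ) (p : Pt n) : Matrix (Fin n) (Fin n) ℝ :=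
  Matrix.of fun i j => pd i (fun q => θ q j) p - pd j (fun q => θ q i) p

lemma wedge_apply (a b : Fin n → ℝ) (i j : Fin n) : wedge a b i j = a i * b j - b i * a j := rfl

lemma contDiffOn_differential (hf : ContDiffOn ℝ ∞ f B) (hB : IsOpen B) :
    ContDiffOn ℝ ∞ (differential f) B :=
  contDiffOn_pi.2 fun i => contDiffOn_pd hf hB i

lemma differential_congr_of_eqOn (hB : IsOpen B) (h : Set.EqOn f f' B) (hp : p ∈ B) :
    differential f p = differential f' p :=
  funext fun i => pd_congr_of_eqOn hB h hp i

lemma differential_sub (hf : DifferentiableAt ℝ f p) (hf' : DifferentiableAt ℝ f' p) :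
    differential (fun q => f q - f' q) p = differential f p - differential f' p :=
  funext fun i => pd_sub hf hf' i

lemma differential_mul (hf : DifferentiableAt ℝ f p) (hf' : DifferentiableAt ℝ f' p) :
    differential (fun q => f q * f' q) p = f' p • differential f p + f p • differential f' p := by
  ext i
  simp only [differential, pd_mul hf hf', Pi.add_apply, Pi.smul_apply, smul_eq_mul, mul_comm]

lemma differential_comp {φ : ℝ → ℝ} (hφ : DifferentiableAt ℝ φ (f p))
    (hf : DifferentiableAt ℝ f p) :
    differential (fun q => φ (f q)) p = deriv φ (f p) • differential f p :=
  funext fun i => pd_comp hφ hf i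

lemma fderiv_eq_smul_iff_differential (c : ℝ) :
    fderiv ℝ f p = c • fderiv ℝ f' p ↔ differential f p = c • differential f' p := by
  refine ⟨fun h => funext fun i => congr($h (Pi.single i 1)), fun h => ?_⟩
  ext w
  have hpd (i : Fin n) : pd i f p = c * pd i f' p := congrFun h i
  simp only [_root_.smul_apply, fderiv_apply_eq_sum_pd, hpd, smul_eq_mul, Finset.mul_sum,
    mul_left_comm]

lemma extD_add (hθ : DifferentiableAt ℝ θ p) (hη : DifferentiableAt ℝ η p) :
    extD (fun q => θ q + η q) p = extD θ p + extD η p := by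
  rw [differentiableAt_pi] at hθ hη
  ext i j
  simp only [extD, of_apply, Pi.add_apply, pd_add (hθ _) (hη _), Matrix.add_apply]
  ring

lemma extD_sub (hθ : DifferentiableAt ℝ θ p) (hη : DifferentiableAt ℝ η p) :
    extD (fun q => θ q - η q) p = extD θ p - extD η p := by
  rw [differentiableAt_pi] at hθ hη
  ext i j
  simp only [extD, of_apply, Pi.sub_apply, pd_sub (hθ _) (hη _), Matrix.sub_apply]
  ring

lemma extD_smul (hf : DifferentiableAt ℝ f p) (hθ : DifferentiableAt ℝ θ p) :
    extD (fun q => f q • θ q) p = wedge (differential f p) (θ p) + f p • extD θ p := by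
  rw [differentiableAt_pi] at hθ
  ext i j
  simp only [extD, of_apply, Pi.smul_apply, smul_eq_mul, pd_mul hf (hθ _), Matrix.add_apply,
    Matrix.smul_apply, wedge_apply, differential]
  ring

lemma extD_differential (hf : ContDiffOn ℝ ∞ f B) (hB : IsOpen B) (hp : p ∈ B) :
    extD (differential f) p = 0 := by
  ext i j
  exact sub_eq_zero.2 (pd_comm hf hB hp i j)

theorem exists_differential_eq_of_extD_eq_zero (hB : IsOpen B) (hc : Convex ℝ B)
    (hθ : ContDiffOn ℝ ∞ θ B) (hd : ∀ p ∈ B, extD θ p = 0) :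
    ∃ F : Pt n → ℝ, ContDiffOn ℝ ∞ F B ∧ ∀ p ∈ B, differential F p = θ p := by
  let W (p : Pt n) : Pt n →L[ℝ] ℝ :=
    ∑ i, θ p i • ContinuousLinearMap.proj (R := ℝ) (φ := fun _ : Fin n => ℝ) i
  have hW : ContDiffOn ℝ ∞ W B :=
    ContDiffOn.sum fun i _ => (contDiffOn_pi.1 hθ i).smul contDiffOn_const
  have hWd (p : Pt n) (hp : p ∈ B) (x y : Pt n) :
      fderiv ℝ W p x y = ∑ i, ∑ j, x j * pd j (fun q => θ q i) p * y i := by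
    have : HasFDerivAt W (∑ i, (fderiv ℝ (fun q => θ q i) p).smulRight
        (ContinuousLinearMap.proj (R := ℝ) (φ := fun _ : Fin n => ℝ) i)) p :=
      HasFDerivAt.fun_sum fun i _ => (differentiableAt_of_contDiffOn
        (contDiffOn_pi.1 hθ i) hB hp).hasFDerivAt.smul_const
          (ContinuousLinearMap.proj (R := ℝ) (φ := fun _ : Fin n => ℝ) i)
    simp only [this.fderiv, _root_.sum_apply, ContinuousLinearMap.smulRight_apply,
      _root_.smul_apply, ContinuousLinearMap.proj_apply, smul_eq_mul, fderiv_apply_eq_sum_pd,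
      Finset.sum_mul]
  obtain ⟨F, hF⟩ := hc.exists_forall_hasFDerivAt_of_fderiv_symmetric hB
    (hW.differentiableOn (by simp)) fun p hp x y => by
      rw [hWd p hp, hWd p hp, Finset.sum_comm]
      refine Finset.sum_congr rfl fun i _ => Finset.sum_congr rfl fun j _ => ?_
      rw [sub_eq_zero.1 congr($(hd p hp) i j)]
      ring
  refine ⟨F, (contDiffOn_infty_iff_fderiv_of_isOpen hB).2
    ⟨fun p hp => (hF p hp).differentiableAt.differentiableWithinAt,
      hW.congr fun p hp => (hF p hp).fderiv⟩, fun p hp => funext fun i => ?_⟩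
  simp [differential, pd, (hF p hp).fderiv, W, Pi.single_apply]

end DifferentialForms

section SmoothMaps

variable {E F : Type*} [NormedAddCommGroup E] [NormedSpace ℝ E]
  [NormedAddCommGroup F] [NormedSpace ℝ F] {B : Set E} {p : E}

theorem exists_openPartialHomeomorph_of_hasFDerivAt_equiv [CompleteSpace E] {Φ : E → E}
    {Φ' : E ≃L[ℝ] E} (hΦ : ContDiffOn ℝ ∞ Φ B) (hB : IsOpen B) (hp : p ∈ B)
    (hΦ' : HasFDerivAt Φ (Φ' : E →L[ℝ] E) p) :
    ∃ S : OpenPartialHomeomorph E E,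
      ⇑S = Φ ∧ p ∈ S.source ∧ S.source ⊆ B ∧ ContDiffOn ℝ ∞ S.symm S.target := by
  have hat (q : E) (hq : q ∈ B) : ContDiffAt ℝ ∞ Φ q := hΦ.contDiffAt (hB.mem_nhds hq)
  let N := B ∩ fderiv ℝ Φ ⁻¹' Set.range ((↑) : (E ≃L[ℝ] E) → E →L[ℝ] E)
  have hN : IsOpen N :=
    (((contDiffOn_infty_iff_fderiv_of_isOpen hB).1 hΦ).2.continuousOn).isOpen_inter_preimage hB
      ContinuousLinearEquiv.isOpen
  let S := ((hat p hp).toOpenPartialHomeomorph Φ hΦ' (by simp)).restrOpen N hN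
  have hS : S.source ⊆ N := Set.inter_subset_right
  refine ⟨S, rfl, ⟨(hat p hp).mem_toOpenPartialHomeomorph_source hΦ' (by simp), hp,
    Φ', hΦ'.fderiv.symm⟩, fun q hq => (hS hq).1, fun y hy => ?_⟩
  obtain ⟨hyB, Ψ', hΨ'⟩ := hS (S.map_target hy)
  exact (S.contDiffAt_symm hy
    (hΨ' ▸ (differentiableAt_of_contDiffOn hΦ hB hyB).hasFDerivAt)
    (hat _ hyB)).contDiffWithinAt

theorem exists_openPartialHomeomorph_linearizing [CompleteSpace E] {v : E → ℝ}
    (hv : ContDiffOn ℝ ∞ v B) (hB : IsOpen B) (hp : p ∈ B) (hdv : fderiv ℝ v p ≠ 0) :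
    ∃ (S : OpenPartialHomeomorph E E) (L : E →L[ℝ] ℝ) (w : E), p ∈ S.source ∧ S.source ⊆ B ∧
      ContDiffOn ℝ ∞ S.symm S.target ∧ L w = 1 ∧ ∀ q, L (S q) = v q := by
  set L := fderiv ℝ v p with hL
  obtain ⟨w, hw⟩ : ∃ w, L w = 1 :=
    L.toLinearMap.surjective (ContinuousLinearMap.coe_injective.ne hdv) 1
  have hΦ : ContDiffOn ℝ ∞ (fun q => q + (v q - L q) • w) B :=
    contDiffOn_id.add ((hv.sub L.contDiff.contDiffOn).smul contDiffOn_const)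
  have hΦ' : HasFDerivAt (fun q => q + (v q - L q) • w)
      ((ContinuousLinearEquiv.refl ℝ E : E ≃L[ℝ] E) : E →L[ℝ] E) p := by
    have := (hasFDerivAt_id p).fun_add
      (((differentiableAt_of_contDiffOn hv hB hp).hasFDerivAt.sub L.hasFDerivAt).smul_const w)
    simpa [← hL] using this
  obtain ⟨S, hS, hpS, hSB, hsymm⟩ :=
    exists_openPartialHomeomorph_of_hasFDerivAt_equiv hΦ hB hp hΦ'
  exact ⟨S, L, w, hpS, hSB, hsymm, hw, fun q => by simp [hS, hw]⟩

theorem exists_contDiff_eventuallyEq [HasContDiffBump E] {f : E → F} (hf : ContDiffOn ℝ ∞ f B)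
    (hB : IsOpen B) (hp : p ∈ B) : ∃ f' : E → F, ContDiff ℝ ∞ f' ∧ f' =ᶠ[𝓝 p] f := by
  obtain ⟨r, hr, hrB⟩ := Metric.nhds_basis_closedBall.mem_iff.1 (hB.mem_nhds hp)
  let b : ContDiffBump p := ⟨r / 2, r, by positivity, by linarith⟩
  refine ⟨fun x => b x • f x, contDiff_iff_contDiffAt.2 fun x => ?_, ?_⟩
  · by_cases hx : x ∈ tsupport b
    · exact b.contDiffAt.smul (hf.contDiffAt (hB.mem_nhds (hrB (b.tsupport_eq ▸ hx))))
    · have hzero : (fun x => b x • f x) =ᶠ[𝓝 x] 0 :=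
        notMem_tsupport_iff_eventuallyEq.1 fun h => hx (tsupport_smul_subset_left b f h)
      exact (contDiffAt_const (c := (0 : F))).congr_of_eventuallyEq hzero
  · filter_upwards [b.eventuallyEq_one] with x hx
    simp [hx]

lemma eq_of_hasFDerivAt_smul {H c : E → ℝ} {L : E →L[ℝ] ℝ} (hBc : Convex ℝ B)
    (hH : ∀ x ∈ B, HasFDerivAt H (c x • L) x) {x y : E} (hx : x ∈ B) (hy : y ∈ B)
    (hL : L x = L y) : H x = H y := by
  obtain ⟨z, -, hz⟩ := domain_mvt (fun x hx => (hH x hx).hasFDerivWithinAt) hBc hx hy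
  have : L (y - x) = 0 := by rw [map_sub, hL, sub_self]
  simp only [_root_.smul_apply, this, smul_zero] at hz
  exact (sub_eq_zero.1 hz).symm

theorem exists_eventuallyEq_comp_of_fderiv_eq_smul [CompleteSpace E] {h v c : E → ℝ}
    (hh : ContDiffOn ℝ ∞ h B) (hv : ContDiffOn ℝ ∞ v B) (hB : IsOpen B) (hp : p ∈ B)
    (hdh : ∀ q ∈ B, fderiv ℝ h q = c q • fderiv ℝ v q) (hdv : fderiv ℝ v p ≠ 0) :
    ∃ α : ℝ → ℝ, ContDiff ℝ ∞ α ∧ ∀ᶠ q in 𝓝 p, h q = α (v q) := by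
  obtain ⟨S, L, w, hpS, hSB, hsymm, hLw, hLS⟩ :=
    exists_openPartialHomeomorph_linearizing hv hB hp hdv
  obtain ⟨r, hr, hrS⟩ := Metric.isOpen_iff.1 S.open_target (S p) (S.map_source hpS)
  -- in the linearizing coordinates `v` becomes `L`, so `h` is constant on the slices `L = const`
  have hder (y : E) (hy : y ∈ Metric.ball (S p) r) :
      HasFDerivAt (h ∘ S.symm) (c (S.symm y) • L) y := by
    have hyt := hrS hy
    have hyB := hSB (S.map_target hyt)
    have hsymm' := (differentiableAt_of_contDiffOn hsymm S.open_target hyt).hasFDerivAt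
    have hvL : HasFDerivAt (v ∘ S.symm) L y := by
      refine L.hasFDerivAt.congr_of_eventuallyEq ?_
      filter_upwards [S.open_target.mem_nhds hyt] with z hz
      rw [Function.comp_apply, ← hLS, S.right_inv hz]
    have hvS := (differentiableAt_of_contDiffOn hv hB hyB).hasFDerivAt.comp y hsymm'
    rw [← hvS.unique hvL, ← ContinuousLinearMap.smul_comp, ← hdh _ hyB]
    exact (differentiableAt_of_contDiffOn hh hB hyB).hasFDerivAt.comp y hsymm'
  let γ (t : ℝ) : E := S p + (t - v p) • w
  have hγ : ContDiff ℝ ∞ γ := by fun_prop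
  have hγp : γ (v p) ∈ Metric.ball (S p) r := by simpa [γ] using hr
  have hsub : γ ⁻¹' Metric.ball (S p) r ⊆ γ ⁻¹' S.target := Set.preimage_mono hrS
  obtain ⟨α, hα, hαh⟩ := exists_contDiff_eventuallyEq (p := v p) (f := h ∘ S.symm ∘ γ)
    (B := γ ⁻¹' S.target)
    (hh.comp (hsymm.comp hγ.contDiffOn fun _ ht => ht) fun t ht => hSB (S.map_target ht))
    (S.open_target.preimage hγ.continuous) (hsub hγp)
  have hvc : ContinuousAt v p := (differentiableAt_of_contDiffOn hv hB hp).continuousAt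
  refine ⟨α, hα, ?_⟩
  filter_upwards [hvc.eventually hαh, S.open_source.mem_nhds hpS,
    (S.continuousAt hpS).preimage_mem_nhds (Metric.ball_mem_nhds _ hr),
    hvc.preimage_mem_nhds ((Metric.isOpen_ball.preimage hγ.continuous).mem_nhds hγp)]
    with q hαq hqS hSq hγq
  have := eq_of_hasFDerivAt_smul (convex_ball _ _) hder hSq hγq (by simp [γ, hLS, hLw])
  simpa [S.left_inv hqS, hαq] using this

end SmoothMaps

section JacobiEquation

/-- The pair `(y, z)` solves `y' = z`, `z' = K y` on `J`: the first-order form of the scalar Jacobi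
equation `y'' = K y`. -/
def SolvesJacobi (K y z : ℝ → ℝ) (J : Set ℝ) : Prop :=
  ∀ t ∈ J, HasDerivAt y (z t) t ∧ HasDerivAt z (K t * y t) t

namespace SolvesJacobi

variable {K y z y' z' : ℝ → ℝ} {J J' : Set ℝ}

lemma mono (h : SolvesJacobi K y z J) (hJ : J' ⊆ J) : SolvesJacobi K y z J' :=
  fun t ht => h t (hJ ht)

theorem contDiffOn (h : SolvesJacobi K y z J) (hJ : IsOpen J) (hK : ContDiffOn ℝ ∞ K J) :
    ContDiffOn ℝ ∞ y J ∧ ContDiffOn ℝ ∞ z J := by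
  suffices bootstrap : ∀ m : ℕ, ContDiffOn ℝ m y J ∧ ContDiffOn ℝ m z J from
    ⟨contDiffOn_infty.2 fun m => (bootstrap m).1, contDiffOn_infty.2 fun m => (bootstrap m).2⟩
  have hy : DifferentiableOn ℝ y J :=
    fun t ht => (h t ht).1.differentiableAt.differentiableWithinAt
  have hz : DifferentiableOn ℝ z J :=
    fun t ht => (h t ht).2.differentiableAt.differentiableWithinAt
  intro m
  induction m with
  | zero => exact ⟨contDiffOn_zero.2 hy.continuousOn, contDiffOn_zero.2 hz.continuousOn⟩
  | succ m ih =>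
    simp only [Nat.cast_add, Nat.cast_one, contDiffOn_succ_iff_deriv_of_isOpen hJ]
    exact ⟨⟨hy, by simp, ih.2.congr fun t ht => (h t ht).1.deriv⟩,
      ⟨hz, by simp, ((hK.of_le (by exact_mod_cast le_top)).mul ih.1).congr
        fun t ht => (h t ht).2.deriv⟩⟩

theorem wronskian_eq (h : SolvesJacobi K y z J) (h' : SolvesJacobi K y' z' J) (hJ : IsOpen J)
    (hJc : IsPreconnected J) {s t : ℝ} (hs : s ∈ J) (ht : t ∈ J) :
    y t * z' t - y' t * z t = y s * z' s - y' s * z s := by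
  have hd (x : ℝ) (hx : x ∈ J) : HasDerivAt (fun x => y x * z' x - y' x * z x) 0 x := by
    exact (((h x hx).1.mul (h' x hx).2).sub ((h' x hx).1.mul (h x hx).2)).congr_deriv (by ring)
  exact hJ.is_const_of_deriv_eq_zero hJc
    (fun x hx => (hd x hx).differentiableAt.differentiableWithinAt) (fun x hx => (hd x hx).deriv)
    ht hs

end SolvesJacobi

theorem exists_solvesJacobi {K : ℝ → ℝ} {t₀ : ℝ} (hK : ContDiffAt ℝ 1 K t₀) (y₀ z₀ : ℝ) :
    ∃ r > 0, ∃ y z : ℝ → ℝ, y t₀ = y₀ ∧ z t₀ = z₀ ∧ SolvesJacobi K y z (Metric.ball t₀ r) := by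
  -- adjoining the time as a third unknown makes the system autonomous
  let F (x : ℝ × ℝ × ℝ) : ℝ × ℝ × ℝ := (1, x.2.2, K x.1 * x.2.1)
  have hF : ContDiffAt ℝ 1 F (t₀, y₀, z₀) := by
    have : ContDiffAt ℝ 1 (fun x : ℝ × ℝ × ℝ => K x.1) (t₀, y₀, z₀) :=
      ContDiffAt.comp (t₀, y₀, z₀) (g := K) hK contDiffAt_fst
    fun_prop
  obtain ⟨φ, hφ₀, r, hr, hφ⟩ :=
    hF.exists_forall_mem_closedBall_exists_eq_forall_mem_Ioo_hasDerivAt₀ t₀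
  simp only [← Real.ball_eq_Ioo] at hφ
  have hcoord (ℓ : ℝ × ℝ × ℝ →L[ℝ] ℝ) (t : ℝ) (ht : t ∈ Metric.ball t₀ r) :
      HasDerivAt (fun t => ℓ (φ t)) (ℓ (F (φ t))) t :=
    ℓ.hasFDerivAt.comp_hasDerivAt t (hφ t ht)
  have htime (t : ℝ) (ht : t ∈ Metric.ball t₀ r) : (φ t).1 = t := by
    have hd (s : ℝ) (hs : s ∈ Metric.ball t₀ r) : HasDerivAt (fun s => (φ s).1 - s) 0 s := by
      simpa [F] using (hcoord (.fst ℝ ℝ (ℝ × ℝ)) s hs).fun_sub (hasDerivAt_id s)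
    have := Metric.isOpen_ball.is_const_of_deriv_eq_zero (convex_ball t₀ r).isPreconnected
      (fun s hs => (hd s hs).differentiableAt.differentiableWithinAt) (fun s hs => (hd s hs).deriv)
      ht (Metric.mem_ball_self hr)
    simpa [hφ₀, sub_eq_zero] using this
  refine ⟨r, hr, fun t => (φ t).2.1, fun t => (φ t).2.2, by simp [hφ₀], by simp [hφ₀],
    fun t ht => ⟨hcoord ((ContinuousLinearMap.fst ℝ ℝ ℝ).comp (.snd ℝ ℝ (ℝ × ℝ))) t ht, ?_⟩⟩
  simpa [F, htime t ht] using
    hcoord ((ContinuousLinearMap.snd ℝ ℝ ℝ).comp (.snd ℝ ℝ (ℝ × ℝ))) t ht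

theorem exists_fundamental_solvesJacobi {K : ℝ → ℝ} {J : Set ℝ} {t₀ : ℝ}
    (hK : ContDiffOn ℝ ∞ K J) (hJ : IsOpen J) (ht₀ : t₀ ∈ J) :
    ∃ I ⊆ J, IsOpen I ∧ t₀ ∈ I ∧ ∃ y₁ z₁ y₂ z₂ : ℝ → ℝ, SolvesJacobi K y₁ z₁ I ∧
      SolvesJacobi K y₂ z₂ I ∧ ∀ t ∈ I, y₁ t * z₂ t - y₂ t * z₁ t = 1 := by
  have hK₁ : ContDiffAt ℝ 1 K t₀ :=
    (hK.contDiffAt (hJ.mem_nhds ht₀)).of_le (by exact_mod_cast le_top)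
  obtain ⟨r₁, hr₁, y₁, z₁, hy₁, hz₁, h₁⟩ := exists_solvesJacobi hK₁ 1 0
  obtain ⟨r₂, hr₂, y₂, z₂, hy₂, hz₂, h₂⟩ := exists_solvesJacobi hK₁ 0 1
  obtain ⟨r₃, hr₃, hJ₃⟩ := Metric.isOpen_iff.1 hJ t₀ ht₀
  have hr : 0 < min (min r₁ r₂) r₃ := lt_min (lt_min hr₁ hr₂) hr₃
  have hle₁₂ : min (min r₁ r₂) r₃ ≤ min r₁ r₂ := min_le_left _ _
  replace h₁ := h₁.mono (Metric.ball_subset_ball (hle₁₂.trans (min_le_left r₁ r₂)))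
  replace h₂ := h₂.mono (Metric.ball_subset_ball (hle₁₂.trans (min_le_right r₁ r₂)))
  refine ⟨_, (Metric.ball_subset_ball (min_le_right _ _)).trans hJ₃, Metric.isOpen_ball,
    Metric.mem_ball_self hr, y₁, z₁, y₂, z₂, h₁, h₂, fun t ht => ?_⟩
  rw [h₁.wronskian_eq h₂ Metric.isOpen_ball (convex_ball _ _).isPreconnected
    (Metric.mem_ball_self hr) ht, hy₁, hz₁, hy₂, hz₂]
  norm_num

end JacobiEquation

section CoordinateChange

variable {n : ℕ} {B : Set (Pt n)} {Ξ : Pt n → Pt n} {p : Pt n}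

lemma hasFDerivAt_jac (h : DifferentiableAt ℝ Ξ p) :
    HasFDerivAt Ξ (Matrix.toLin' (jac Ξ p)).toContinuousLinearMap p := by
  refine hasFDerivAt_pi'.2 fun i => (differentiableAt_pi.1 h i).hasFDerivAt.congr_fderiv ?_
  ext1 w
  simp [fderiv_apply_eq_sum_pd, jac, Matrix.toLin'_apply, mulVec, dotProduct, mul_comm]

theorem exists_openPartialHomeomorph_of_det_jac_ne_zero (hΞ : ContDiffOn ℝ ∞ Ξ B) (hB : IsOpen B)
    (hp : p ∈ B) (hJ : (jac Ξ p).det ≠ 0) :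
    ∃ S : OpenPartialHomeomorph (Pt n) (Pt n),
      ⇑S = Ξ ∧ p ∈ S.source ∧ S.source ⊆ B ∧ ContDiffOn ℝ ∞ S.symm S.target := by
  let Ξ' : Pt n ≃L[ℝ] Pt n :=
    (Matrix.toLin'OfInv (Matrix.nonsing_inv_mul _ hJ.isUnit)
      (Matrix.mul_nonsing_inv _ hJ.isUnit)).toContinuousLinearEquiv
  have hΞ' : (Ξ' : Pt n →L[ℝ] Pt n) = (Matrix.toLin' (jac Ξ p)).toContinuousLinearMap := rfl
  exact exists_openPartialHomeomorph_of_hasFDerivAt_equiv hΞ hB hp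
    (hΞ' ▸ hasFDerivAt_jac (differentiableAt_of_contDiffOn hΞ hB hp))

lemma jac_mul_jac_symm {S : OpenPartialHomeomorph (Pt n) (Pt n)} {q : Pt n} (hq : q ∈ S.target)
    (hS : DifferentiableAt ℝ S (S.symm q)) (hS' : DifferentiableAt ℝ S.symm q) :
    jac S (S.symm q) * jac S.symm q = 1 := by
  have hid : HasFDerivAt (S ∘ S.symm) (ContinuousLinearMap.id ℝ (Pt n)) q :=
    (hasFDerivAt_id q).congr_of_eventuallyEq
      (Filter.eventually_of_mem (S.open_target.mem_nhds hq) fun _ => S.right_inv)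
  have hcomp := ((hasFDerivAt_jac hS).comp q (hasFDerivAt_jac hS')).unique hid
  refine Matrix.toLin'.injective (LinearMap.ext fun w => ?_)
  rw [Matrix.toLin'_mul, Matrix.toLin'_one]
  exact congr($hcomp w)

theorem pullback_symm {S : OpenPartialHomeomorph (Pt n) (Pt n)} {q : Pt n} (hq : q ∈ S.target)
    (hS : DifferentiableAt ℝ S (S.symm q)) (hS' : DifferentiableAt ℝ S.symm q)
    {g : Pt n → Fin n → Fin n → ℝ} {G : Matrix (Fin n) (Fin n) ℝ}
    (hg : Matrix.of (g (S.symm q)) = (jac S (S.symm q))ᵀ * G * jac S (S.symm q)) :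
    pullback g S.symm q = G :=
  calc pullback g S.symm q
    _ = (jac S.symm q)ᵀ * ((jac S (S.symm q))ᵀ * G * jac S (S.symm q)) * jac S.symm q := by
        rw [pullback, hg]
    _ = (jac S (S.symm q) * jac S.symm q)ᵀ * G * (jac S (S.symm q) * jac S.symm q) := by
        simp only [Matrix.transpose_mul, Matrix.mul_assoc]
    _ = G := by rw [jac_mul_jac_symm hq hS hS']; simp

end CoordinateChange

section LeviCivita

variable {n : ℕ} {B : Set (Pt n)} {g : Pt n → Fin n → Fin n → ℝ} {θ V W : Pt n → Fin n → ℝ}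
  {p : Pt n}

/-- The componentwise partial derivative `∂_i V` of a vector-valued function. -/
def pdVec (i : Fin n) (V : Pt n → Fin n → ℝ) (p : Pt n) : Fin n → ℝ :=
  fun j => pd i (fun q => V q j) p

/-- The matrix `Γ_i = (Γ^k_{ij})_{kj}` of the Levi-Civita connection in the direction `∂_i`. -/
def connMatrix (g : Pt n → Fin n → Fin n → ℝ) (i : Fin n) (p : Pt n) : Matrix (Fin n) (Fin n) ℝ :=
  Matrix.of fun k j => chr g k i j p

/-- The matrix `R(∂_i, ∂_j)` of the curvature operator. -/
def curvMatrix (g : Pt n → Fin n → Fin n → ℝ) (i j : Fin n) (p : Pt n) :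
    Matrix (Fin n) (Fin n) ℝ :=
  Matrix.of fun l k => RiemUp g l i j k p

/-- The covariant derivative `∇_i θ` of a 1-form. -/
def nablaForm (g : Pt n → Fin n → Fin n → ℝ) (i : Fin n) (θ : Pt n → Fin n → ℝ) (p : Pt n) :
    Fin n → ℝ :=
  pdVec i θ p - (connMatrix g i p)ᵀ *ᵥ θ p

/-- The 1-form `g(V, ·)` metrically equivalent to the vector field `V`. -/
def lower (g : Pt n → Fin n → Fin n → ℝ) (V : Pt n → Fin n → ℝ) (p : Pt n) : Fin n → ℝ :=
  Matrix.of (g p) *ᵥ V p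

/-- `g` is a smooth pseudo-Riemannian metric, of arbitrary signature, on `B`. -/
structure IsMetricOn (g : Pt n → Fin n → Fin n → ℝ) (B : Set (Pt n)) : Prop where
  contDiffOn : ∀ i j, ContDiffOn ℝ ∞ (fun p => g p i j) B
  isSymm : ∀ p ∈ B, (Matrix.of (g p)).IsSymm
  det_ne_zero : ∀ p ∈ B, (Matrix.of (g p)).det ≠ 0

lemma contDiffOn_dotProduct (hθ : ContDiffOn ℝ ∞ θ B) (hV : ContDiffOn ℝ ∞ V B) :
    ContDiffOn ℝ ∞ (fun q => θ q ⬝ᵥ V q) B :=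
  ContDiffOn.sum fun j _ => (contDiffOn_pi.1 hθ j).mul (contDiffOn_pi.1 hV j)

lemma differentiableAt_dotProduct (hθ : DifferentiableAt ℝ θ p) (hV : DifferentiableAt ℝ V p) :
    DifferentiableAt ℝ (fun q => θ q ⬝ᵥ V q) p :=
  DifferentiableAt.fun_sum fun j _ =>
    (differentiableAt_pi.1 hθ j).fun_mul (differentiableAt_pi.1 hV j)

lemma pd_dotProduct (hθ : DifferentiableAt ℝ θ p) (hV : DifferentiableAt ℝ V p) (i : Fin n) :
    pd i (fun q => θ q ⬝ᵥ V q) p = pdVec i θ p ⬝ᵥ V p + θ p ⬝ᵥ pdVec i V p := by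
  rw [differentiableAt_pi] at hθ hV
  simp only [dotProduct, pdVec]
  rw [pd_sum fun j _ => (hθ j).fun_mul (hV j), ← Finset.sum_add_distrib]
  exact Finset.sum_congr rfl fun j _ => pd_mul (hθ j) (hV j) i

lemma pdVec_mulVec {A : Pt n → Matrix (Fin n) (Fin n) ℝ}
    (hA : ∀ a b, DifferentiableAt ℝ (fun q => A q a b) p) (hV : DifferentiableAt ℝ V p)
    (i : Fin n) :
    pdVec i (fun q => A q *ᵥ V q) p =
      (Matrix.of fun a b => pd i (fun q => A q a b) p) *ᵥ V p + A p *ᵥ pdVec i V p :=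
  funext fun a => pd_dotProduct (differentiableAt_pi.2 (hA a)) hV i

lemma nablaForm_congr_of_eqOn (hB : IsOpen B) (h : Set.EqOn θ V B) (hp : p ∈ B) (i : Fin n) :
    nablaForm g i θ p = nablaForm g i V p := by
  have hpd : pdVec i θ p = pdVec i V p :=
    funext fun j => pd_congr_of_eqOn hB (fun q hq => congrFun (h hq) j) hp i
  rw [nablaForm, nablaForm, hpd, h hp]

lemma nablaForm_differential (g : Pt n → Fin n → Fin n → ℝ) (f : Pt n → ℝ) (i j : Fin n)
    (p : Pt n) : nablaForm g i (differential f) p j = Hess g f i j p :=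
  rfl

lemma pd_dotProduct_eq_nablaForm_add_covD (hθ : DifferentiableAt ℝ θ p)
    (hV : DifferentiableAt ℝ V p) (i : Fin n) :
    pd i (fun q => θ q ⬝ᵥ V q) p =
      nablaForm g i θ p ⬝ᵥ V p + θ p ⬝ᵥ fun j => covD g V i j p := by
  have hcov : (fun j => covD g V i j p) = pdVec i V p + connMatrix g i p *ᵥ V p := rfl
  rw [pd_dotProduct hθ hV, hcov, nablaForm, sub_dotProduct, dotProduct_add, mulVec_transpose,
    ← dotProduct_mulVec]
  ring

lemma contDiffOn_det {A : Pt n → Matrix (Fin n) (Fin n) ℝ}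
    (hA : ∀ i j, ContDiffOn ℝ ∞ (fun p => A p i j) B) : ContDiffOn ℝ ∞ (fun p => (A p).det) B := by
  simp only [Matrix.det_apply']
  exact ContDiffOn.sum fun σ _ => contDiffOn_const.mul (contDiffOn_prod fun i _ => hA _ _)

namespace IsMetricOn

lemma contDiffOn_ginv (hg : IsMetricOn g B) (k l : Fin n) :
    ContDiffOn ℝ ∞ (fun p => ginv g p k l) B := by
  simp only [ginv, Matrix.inv_def, Ring.inverse_eq_inv', Matrix.smul_apply, smul_eq_mul,
    Matrix.adjugate_apply]
  refine ((contDiffOn_det hg.contDiffOn).inv hg.det_ne_zero).mul (contDiffOn_det ?_)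
  intro i j
  by_cases h : i = l
  · simpa [h, Matrix.updateRow_apply] using contDiffOn_const
  · simpa [h, Matrix.updateRow_apply] using hg.contDiffOn i j

lemma contDiffOn_chr (hg : IsMetricOn g B) (hB : IsOpen B) (k i j : Fin n) :
    ContDiffOn ℝ ∞ (chr g k i j) B :=
  contDiffOn_const.mul <| ContDiffOn.sum fun l _ => (hg.contDiffOn_ginv k l).mul <|
    ((contDiffOn_pd (hg.contDiffOn l j) hB i).add
      (contDiffOn_pd (hg.contDiffOn l i) hB j)).sub (contDiffOn_pd (hg.contDiffOn i j) hB l)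

lemma contDiffOn_lower (hg : IsMetricOn g B) (hV : ContDiffOn ℝ ∞ V B) :
    ContDiffOn ℝ ∞ (lower g V) B :=
  contDiffOn_pi.2 fun i => contDiffOn_dotProduct (contDiffOn_pi.2 (hg.contDiffOn i)) hV

lemma contDiffOn_gradV (hg : IsMetricOn g B) (hB : IsOpen B) {f : Pt n → ℝ}
    (hf : ContDiffOn ℝ ∞ f B) : ContDiffOn ℝ ∞ (gradV g f) B :=
  contDiffOn_pi.2 fun i => contDiffOn_dotProduct (contDiffOn_pi.2 (hg.contDiffOn_ginv i))
    (contDiffOn_differential hf hB)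

lemma contDiffOn_nablaForm (hg : IsMetricOn g B) (hB : IsOpen B) (hθ : ContDiffOn ℝ ∞ θ B)
    (i : Fin n) : ContDiffOn ℝ ∞ (nablaForm g i θ) B :=
  contDiffOn_pi.2 fun j => (contDiffOn_pd (contDiffOn_pi.1 hθ j) hB i).sub <|
    contDiffOn_dotProduct (contDiffOn_pi.2 fun k => hg.contDiffOn_chr hB k i j) hθ

lemma mul_ginv (hg : IsMetricOn g B) (hp : p ∈ B) : Matrix.of (g p) * ginv g p = 1 :=
  Matrix.mul_nonsing_inv _ (hg.det_ne_zero p hp).isUnit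

lemma lower_gradV (hg : IsMetricOn g B) (hp : p ∈ B) (f : Pt n → ℝ) :
    lower g (gradV g f) p = differential f p :=
  calc Matrix.of (g p) *ᵥ (ginv g p *ᵥ differential f p)
    _ = differential f p := by rw [mulVec_mulVec, hg.mul_ginv hp, one_mulVec]

lemma pd_symm (hg : IsMetricOn g B) (hB : IsOpen B) (hp : p ∈ B) (l i j : Fin n) :
    pd l (fun q => g q i j) p = pd l (fun q => g q j i) p :=
  pd_congr_of_eqOn hB (fun q hq => (hg.isSymm q hq).apply j i) hp l

lemma chr_symm (hg : IsMetricOn g B) (hB : IsOpen B) (hp : p ∈ B) (k i j : Fin n) :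
    chr g k i j p = chr g k j i p := by
  unfold chr
  congr! 3 with l
  rw [hg.pd_symm hB hp l i j]
  ring

lemma isSymm_Hess (hg : IsMetricOn g B) (hB : IsOpen B) {f : Pt n → ℝ} (hf : ContDiffOn ℝ ∞ f B)
    (hp : p ∈ B) : (Matrix.of fun i j => Hess g f i j p).IsSymm := by
  ext i j
  simp only [transpose_apply, of_apply, Hess, hg.chr_symm hB hp _ j i]
  exact congrArg (· - _) (pd_comm hf hB hp j i)

lemma mul_connMatrix_apply (hg : IsMetricOn g B) (hp : p ∈ B) (i m j : Fin n) :
    (Matrix.of (g p) * connMatrix g i p) m j = (1 / 2) * (pd i (fun q => g q m j) p +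
      pd j (fun q => g q m i) p - pd m (fun q => g q i j) p) := by
  let Y (l : Fin n) : ℝ :=
    pd i (fun q => g q l j) p + pd j (fun q => g q l i) p - pd l (fun q => g q i j) p
  calc (Matrix.of (g p) * connMatrix g i p) m j
    _ = (Matrix.of (g p) *ᵥ ((1 / 2 : ℝ) • (ginv g p *ᵥ Y))) m := rfl
    _ = (1 / 2) * Y m := by
      rw [mulVec_smul, mulVec_mulVec, hg.mul_ginv hp, one_mulVec, Pi.smul_apply, smul_eq_mul]

theorem pd_eq_mul_connMatrix (hg : IsMetricOn g B) (hB : IsOpen B) (hp : p ∈ B) (i : Fin n) :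
    (Matrix.of fun a b => pd i (fun q => g q a b) p) =
      Matrix.of (g p) * connMatrix g i p + (connMatrix g i p)ᵀ * Matrix.of (g p) := by
  have htrans : (connMatrix g i p)ᵀ * Matrix.of (g p) =
      (Matrix.of (g p) * connMatrix g i p)ᵀ := by
    rw [transpose_mul, hg.isSymm p hp]
  ext a b
  rw [htrans, Matrix.add_apply, transpose_apply, hg.mul_connMatrix_apply hp,
    hg.mul_connMatrix_apply hp, of_apply, hg.pd_symm hB hp i b a, hg.pd_symm hB hp a i b,
    hg.pd_symm hB hp b a i]
  ring

theorem nablaForm_lower (hg : IsMetricOn g B) (hB : IsOpen B) (hp : p ∈ B)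
    (hV : DifferentiableAt ℝ V p) (i : Fin n) :
    nablaForm g i (lower g V) p = Matrix.of (g p) *ᵥ fun j => covD g V i j p := by
  have hcov : (fun j => covD g V i j p) = pdVec i V p + connMatrix g i p *ᵥ V p := rfl
  have hpd : pdVec i (lower g V) p =
      (Matrix.of fun a b => pd i (fun q => g q a b) p) *ᵥ V p + Matrix.of (g p) *ᵥ pdVec i V p :=
    pdVec_mulVec (fun a b => differentiableAt_of_contDiffOn (hg.contDiffOn a b) hB hp) hV i
  rw [nablaForm, hpd, hg.pd_eq_mul_connMatrix hB hp, hcov, lower, mulVec_add, mulVec_mulVec,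
    mulVec_mulVec, add_mulVec]
  abel

theorem pd_inner (hg : IsMetricOn g B) (hB : IsOpen B) (hp : p ∈ B) (hV : ContDiffOn ℝ ∞ V B)
    (hW : ContDiffOn ℝ ∞ W B) (i : Fin n) :
    pd i (fun q => V q ⬝ᵥ lower g W q) p =
      V p ⬝ᵥ nablaForm g i (lower g W) p + W p ⬝ᵥ nablaForm g i (lower g V) p := by
  have hdV := differentiableAt_of_contDiffOn hV hB hp
  have hdW := differentiableAt_of_contDiffOn (hg.contDiffOn_lower hW) hB hp
  rw [hg.nablaForm_lower hB hp hdV, dotProduct_mulVec, ← mulVec_transpose, hg.isSymm p hp]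
  simp only [dotProduct_comm (V _), pd_dotProduct_eq_nablaForm_add_covD (g := g) hdW hdV]
  rfl

lemma dotProduct_nablaForm_eq_neg (hg : IsMetricOn g B) (hB : IsOpen B) {c : ℝ}
    (hV : ContDiffOn ℝ ∞ V B) (hW : ContDiffOn ℝ ∞ W B)
    (hc : ∀ q ∈ B, V q ⬝ᵥ lower g W q = c) (hp : p ∈ B) (i : Fin n) :
    V p ⬝ᵥ nablaForm g i (lower g W) p = -(W p ⬝ᵥ nablaForm g i (lower g V) p) := by
  rw [← add_eq_zero_iff_eq_neg, ← hg.pd_inner hB hp hV hW, pd_congr_of_eqOn hB hc hp, pd_const]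

lemma dotProduct_nablaForm_self (hg : IsMetricOn g B) (hB : IsOpen B) {c : ℝ}
    (hV : ContDiffOn ℝ ∞ V B) (hc : ∀ q ∈ B, V q ⬝ᵥ lower g V q = c) (hp : p ∈ B) (i : Fin n) :
    V p ⬝ᵥ nablaForm g i (lower g V) p = 0 :=
  self_eq_neg.1 (hg.dotProduct_nablaForm_eq_neg hB hV hV hc hp i)

end IsMetricOn

theorem curvMatrix_transpose_mulVec (hg : IsMetricOn g B) (hB : IsOpen B) (hp : p ∈ B)
    (hθ : ContDiffOn ℝ ∞ θ B) (i j : Fin n) :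
    (curvMatrix g i j p)ᵀ *ᵥ θ p =
      nablaForm g j (nablaForm g i θ) p - nablaForm g i (nablaForm g j θ) p := by
  have hdΓ (i a b : Fin n) : DifferentiableAt ℝ (fun q => (connMatrix g i q)ᵀ a b) p :=
    differentiableAt_of_contDiffOn (hg.contDiffOn_chr hB b i a) hB hp
  have hdθ := differentiableAt_of_contDiffOn hθ hB hp
  have hdpd (i m : Fin n) : DifferentiableAt ℝ (fun q => pdVec i θ q m) p :=
    differentiableAt_of_contDiffOn (contDiffOn_pd (contDiffOn_pi.1 hθ m) hB i) hB hp
  have hdmul (i m : Fin n) : DifferentiableAt ℝ (fun q => ((connMatrix g i q)ᵀ *ᵥ θ q) m) p :=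
    differentiableAt_dotProduct (differentiableAt_pi.2 (hdΓ i m)) hdθ
  let Γ (i : Fin n) := connMatrix g i p
  let dΓ (i j : Fin n) : Matrix (Fin n) (Fin n) ℝ :=
    Matrix.of fun a b => pd i (fun q => connMatrix g j q a b) p
  have hcurv : curvMatrix g i j p = dΓ i j - dΓ j i + Γ i * Γ j - Γ j * Γ i := rfl
  have hpd (i j : Fin n) : pdVec j (nablaForm g i θ) p =
      pdVec j (pdVec i θ) p - ((dΓ j i)ᵀ *ᵥ θ p + (Γ i)ᵀ *ᵥ pdVec j θ p) := by
    rw [← show pdVec j (fun q => (connMatrix g i q)ᵀ *ᵥ θ q) p =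
      (dΓ j i)ᵀ *ᵥ θ p + (Γ i)ᵀ *ᵥ pdVec j θ p from pdVec_mulVec (hdΓ i) hdθ j]
    exact funext fun m => pd_sub (hdpd i m) (hdmul i m) j
  have hcomm : pdVec j (pdVec i θ) p = pdVec i (pdVec j θ) p :=
    funext fun m => pd_comm (contDiffOn_pi.1 hθ m) hB hp j i
  have hnabla (i j : Fin n) : nablaForm g j (nablaForm g i θ) p =
      pdVec j (nablaForm g i θ) p - (Γ j)ᵀ *ᵥ (pdVec i θ p - (Γ i)ᵀ *ᵥ θ p) := rfl
  rw [hnabla, hnabla, hpd, hpd, hcurv, hcomm]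
  simp only [transpose_add, transpose_sub, transpose_mul, add_mulVec, sub_mulVec, mulVec_sub,
    mulVec_mulVec]
  abel

theorem RicciT_eq_sum_RiemUp (hg : IsMetricOn g B) (hB : IsOpen B) (hp : p ∈ B) (m j : Fin n) :
    RicciT g m j p = ∑ i, RiemUp g i i j m p := by
  have hpd (s k i j : Fin n) :
      pd s (fun q => chr g k i j q) p = pd s (fun q => chr g k j i q) p :=
    pd_congr_of_eqOn hB (fun q hq => hg.chr_symm hB hq k i j) hp s
  simp only [RicciT, RiemUp, Finset.sum_add_distrib, Finset.sum_sub_distrib, hpd _ _ _ m,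
    hg.chr_symm hB hp _ _ m]

end LeviCivita

section NullFrames

variable {G : Matrix (Fin 3) (Fin 3) ℝ} {k l e : Fin 3 → ℝ}

/-- `(k, l, e)` is a null frame for the scalar product with symmetric Gram matrix `G`: the vectors
`k` and `l` are lightlike with product `1`, and `e` is a unit vector orthogonal to both. -/
structure IsNullFrame (G : Matrix (Fin 3) (Fin 3) ℝ) (k l e : Fin 3 → ℝ) : Prop where
  isSymm : G.IsSymm
  kk : k ⬝ᵥ G *ᵥ k = 0
  ll : l ⬝ᵥ G *ᵥ l = 0
  ee : e ⬝ᵥ G *ᵥ e = 1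
  kl : k ⬝ᵥ G *ᵥ l = 1
  ke : k ⬝ᵥ G *ᵥ e = 0
  le : l ⬝ᵥ G *ᵥ e = 0

lemma dotProduct_mulVec_comm_of_isSymm {m : Type*} [Fintype m] {A : Matrix m m ℝ} (hA : A.IsSymm)
    (x y : m → ℝ) : x ⬝ᵥ A *ᵥ y = y ⬝ᵥ A *ᵥ x := by
  rw [dotProduct_mulVec, ← mulVec_transpose, hA, dotProduct_comm]

lemma dotProduct_mulVec_comm_of_transpose_eq_neg {m : Type*} [Fintype m] {A : Matrix m m ℝ}
    (hA : Aᵀ = -A) (x y : m → ℝ) : x ⬝ᵥ A *ᵥ y = -(y ⬝ᵥ A *ᵥ x) := by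
  rw [dotProduct_mulVec, ← mulVec_transpose, hA, neg_mulVec, neg_dotProduct, dotProduct_comm]

lemma dotProduct_mulVec_self_of_transpose_eq_neg {m : Type*} [Fintype m] {A : Matrix m m ℝ}
    (hA : Aᵀ = -A) (x : m → ℝ) : x ⬝ᵥ A *ᵥ x = 0 := by
  linarith [dotProduct_mulVec_comm_of_transpose_eq_neg hA x x]

lemma cross_mulVec_mulVec (M : Matrix (Fin 3) (Fin 3) ℝ) (x y : Fin 3 → ℝ) :
    Mᵀ *ᵥ ((M *ᵥ x) ⨯₃ (M *ᵥ y)) = M.det • (x ⨯₃ y) := by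
  ext i
  fin_cases i <;>
  · simp [cross_apply, Matrix.det_fin_three, mulVec, dotProduct, Fin.sum_univ_three]
    ring

lemma det_neg_of_isLorentz3 (h : IsLorentz3 G) : G.det < 0 := by
  obtain ⟨-, P, -, hP⟩ := h
  have hdet : P.det * G.det * P.det = -1 := by
    simpa [Matrix.det_mul, Fin.prod_univ_three] using congr(Matrix.det $hP)
  by_contra! hG
  nlinarith [mul_nonneg (mul_self_nonneg P.det) hG]

/-- A lightlike vector `k` and a vector `w` not orthogonal to it span the null pair `k`,
`nullPartner G k w`. -/
def nullPartner (G : Matrix (Fin 3) (Fin 3) ℝ) (k w : Fin 3 → ℝ) : Fin 3 → ℝ :=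
  (w ⬝ᵥ G *ᵥ k)⁻¹ • (w - ((w ⬝ᵥ G *ᵥ w) / (2 * (w ⬝ᵥ G *ᵥ k))) • k)

/-- The spacelike unit vector completing a null pair `k`, `l` to a null frame. -/
def nullNormal (G : Matrix (Fin 3) (Fin 3) ℝ) (k l : Fin 3 → ℝ) : Fin 3 → ℝ :=
  (√(-G.det))⁻¹ • ((G *ᵥ k) ⨯₃ (G *ᵥ l))

theorem isNullFrame_nullPartner_nullNormal {w : Fin 3 → ℝ} (hG : G.IsSymm) (hdet : G.det < 0)
    (hk : k ⬝ᵥ G *ᵥ k = 0) (hw : w ⬝ᵥ G *ᵥ k ≠ 0) :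
    IsNullFrame G k (nullPartner G k w) (nullNormal G k (nullPartner G k w)) := by
  set l := nullPartner G k w with hl
  have hkw : k ⬝ᵥ G *ᵥ w = w ⬝ᵥ G *ᵥ k := dotProduct_mulVec_comm_of_isSymm hG k w
  have hkl : k ⬝ᵥ G *ᵥ l = 1 := by
    simp only [hl, nullPartner, mulVec_smul, mulVec_sub, dotProduct_smul, dotProduct_sub, hk, hkw,
      smul_eq_mul, mul_zero, sub_zero]
    exact inv_mul_cancel₀ hw
  have hll : l ⬝ᵥ G *ᵥ l = 0 := by
    simp only [hl, nullPartner, mulVec_smul, mulVec_sub, dotProduct_smul, dotProduct_sub,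
      smul_dotProduct, sub_dotProduct, hk, hkw, smul_eq_mul, mul_zero, sub_zero]
    field_simp
    ring
  have hGe : G *ᵥ nullNormal G k l = (√(-G.det))⁻¹ • G.det • (k ⨯₃ l) := by
    rw [nullNormal, mulVec_smul, ← cross_mulVec_mulVec, hG]
  have hsqrt : √(-G.det) * √(-G.det) = -G.det := Real.mul_self_sqrt (by linarith)
  refine ⟨hG, hk, hll, ?_, hkl, ?_, ?_⟩
  · rw [hGe, nullNormal, smul_dotProduct, dotProduct_smul, dotProduct_smul, cross_dot_cross,
      dotProduct_comm, hk, dotProduct_comm _ l, dotProduct_comm _ l, hll, dotProduct_comm _ k,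
      hkl, dotProduct_mulVec_comm_of_isSymm hG, hkl]
    have hpos : √(-G.det) ≠ 0 := (Real.sqrt_pos.2 (by linarith)).ne'
    simp only [smul_eq_mul]
    field_simp
    linarith
  · rw [hGe, dotProduct_smul, dotProduct_smul, dot_self_cross, smul_zero, smul_zero]
  · rw [hGe, dotProduct_smul, dotProduct_smul, dot_cross_self, smul_zero, smul_zero]

namespace IsNullFrame

variable {A ρ H : Matrix (Fin 3) (Fin 3) ℝ} {θ : Fin 3 → ℝ}

lemma lk (hF : IsNullFrame G k l e) : l ⬝ᵥ G *ᵥ k = 1 :=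
  dotProduct_mulVec_comm_of_isSymm hF.isSymm l k ▸ hF.kl

lemma ek (hF : IsNullFrame G k l e) : e ⬝ᵥ G *ᵥ k = 0 :=
  dotProduct_mulVec_comm_of_isSymm hF.isSymm e k ▸ hF.ke

lemma el (hF : IsNullFrame G k l e) : e ⬝ᵥ G *ᵥ l = 0 :=
  dotProduct_mulVec_comm_of_isSymm hF.isSymm e l ▸ hF.le

lemma mul_inverse (hF : IsNullFrame G k l e) :
    G * (vecMulVec k l + vecMulVec l k + vecMulVec e e) = 1 := by
  let P : Matrix (Fin 3) (Fin 3) ℝ := Matrix.of ![k, l, e]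
  let J : Matrix (Fin 3) (Fin 3) ℝ := !![0, 1, 0; 1, 0, 0; 0, 0, 1]
  have hgram : P * (G * Pᵀ * J) = 1 := by
    have entry (i j : Fin 3) : (P * (G * Pᵀ)) i j = P i ⬝ᵥ G *ᵥ P j := rfl
    have : P * (G * Pᵀ) = J := by
      ext i j
      rw [entry]
      fin_cases i <;> fin_cases j <;> first
        | exact hF.kk | exact hF.kl | exact hF.ke | exact hF.lk | exact hF.ll | exact hF.le
        | exact hF.ek | exact hF.el | exact hF.ee
    rw [← Matrix.mul_assoc, this]
    ext i j
    fin_cases i <;> fin_cases j <;> simp [J, Matrix.mul_apply, Fin.sum_univ_three]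
  have hinv : vecMulVec k l + vecMulVec l k + vecMulVec e e = Pᵀ * J * P := by
    ext i j
    simp [P, J, vecMulVec_apply, Matrix.mul_apply, Fin.sum_univ_three, add_comm]
  rw [hinv, ← Matrix.mul_assoc, ← Matrix.mul_assoc]
  exact mul_eq_one_comm.1 hgram

lemma resolution (hF : IsNullFrame G k l e) :
    vecMulVec k (G *ᵥ l) + vecMulVec l (G *ᵥ k) + vecMulVec e (G *ᵥ e) = 1 := by
  have := mul_eq_one_comm.1 hF.mul_inverse
  simpa only [add_mul, vecMulVec_mul, ← mulVec_transpose, hF.isSymm.eq] using this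

lemma matrix_eq (hF : IsNullFrame G k l e) (A : Matrix (Fin 3) (Fin 3) ℝ) :
    A = vecMulVec (A *ᵥ k) (G *ᵥ l) + vecMulVec (A *ᵥ l) (G *ᵥ k)
      + vecMulVec (A *ᵥ e) (G *ᵥ e) := by
  rw [← mul_vecMulVec, ← mul_vecMulVec, ← mul_vecMulVec, ← mul_add, ← mul_add, hF.resolution,
    mul_one]

lemma covector_eq (hF : IsNullFrame G k l e) (θ : Fin 3 → ℝ) :
    θ = (k ⬝ᵥ θ) • G *ᵥ l + (l ⬝ᵥ θ) • G *ᵥ k + (e ⬝ᵥ θ) • G *ᵥ e :=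
  calc θ
    _ = θ ᵥ* (vecMulVec k (G *ᵥ l) + vecMulVec l (G *ᵥ k) + vecMulVec e (G *ᵥ e)) := by
      rw [hF.resolution, vecMul_one]
    _ = _ := by simp only [vecMul_add, vecMul_vecMulVec, dotProduct_comm θ]

lemma eq_smul_vecMulVec_of_isSymm (hF : IsNullFrame G k l e) (hA : A.IsSymm) (hk : A *ᵥ k = 0)
    (he : A *ᵥ e = 0) : A = (l ⬝ᵥ A *ᵥ l) • vecMulVec (G *ᵥ k) (G *ᵥ k) := by
  have hl : A *ᵥ l = (l ⬝ᵥ A *ᵥ l) • G *ᵥ k := by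
    conv_lhs => rw [hF.covector_eq (A *ᵥ l)]
    simp [dotProduct_mulVec_comm_of_isSymm hA _ l, hk, he]
  conv_lhs => rw [hF.matrix_eq A, hk, he, hl]
  simp [smul_vecMulVec]

lemma eq_smul_wedge_of_transpose_eq_neg (hF : IsNullFrame G k l e) (hA : Aᵀ = -A)
    (hk : A *ᵥ k = 0) : A = (l ⬝ᵥ A *ᵥ e) • wedge (G *ᵥ k) (G *ᵥ e) := by
  have hskew := dotProduct_mulVec_comm_of_transpose_eq_neg hA
  have hself := dotProduct_mulVec_self_of_transpose_eq_neg hA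
  have hl : A *ᵥ l = -(l ⬝ᵥ A *ᵥ e) • G *ᵥ e := by
    conv_lhs => rw [hF.covector_eq (A *ᵥ l)]
    simp [hskew k, hk, hself, hskew e l]
  have he : A *ᵥ e = (l ⬝ᵥ A *ᵥ e) • G *ᵥ k := by
    conv_lhs => rw [hF.covector_eq (A *ᵥ e)]
    simp [hskew k, hk, hself]
  generalize l ⬝ᵥ A *ᵥ e = d at hl he ⊢
  conv_lhs => rw [hF.matrix_eq A, hk, hl, he]
  rw [wedge, smul_sub, zero_vecMulVec, zero_add, smul_vecMulVec, smul_vecMulVec, neg_smul]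
  abel

theorem smul_eq_of_nilpotent (hF : IsNullFrame G k l e) {c h : ℝ}
    (heq : h • ρ - H + c • G = 0) (hHk : H *ᵥ k = 0) (hnil : (G⁻¹ * ρ) ^ 2 = 0) :
    h • ρ = H := by
  have hGG : G⁻¹ * G = 1 :=
    nonsing_inv_mul _ (isUnit_det_of_right_inverse hF.mul_inverse)
  have hρ : h • ρ = H - c • G := by rw [← sub_eq_zero, ← heq]; abel
  have heig : (h • (G⁻¹ * ρ)) *ᵥ k = -c • k := by
    rw [← Matrix.mul_smul, ← mulVec_mulVec, hρ, sub_mulVec, hHk, smul_mulVec, zero_sub, mulVec_neg,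
      mulVec_smul, mulVec_mulVec, hGG, one_mulVec, neg_smul]
  have hsq : (c * c) • k = 0 :=
    calc (c * c) • k
      _ = (h • (G⁻¹ * ρ)) *ᵥ ((h • (G⁻¹ * ρ)) *ᵥ k) := by
        rw [heig, mulVec_smul, heig, smul_smul, neg_mul_neg]
      _ = ((h * h) • (G⁻¹ * ρ) ^ 2) *ᵥ k := by
        rw [mulVec_mulVec, smul_mul_smul_comm, pow_two]
      _ = 0 := by rw [hnil, smul_zero, zero_mulVec]
  have hk : k ≠ 0 := by
    rintro rfl
    simpa using hF.kl
  have hc : c = 0 := mul_self_eq_zero.1 ((smul_eq_zero.1 hsq).resolve_right hk)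
  rw [hρ, hc, zero_smul, sub_zero]

theorem eq_smul_vecMulVec_of_nilpotent (hF : IsNullFrame G k l e) (hρ : ρ.IsSymm)
    (hk : ρ *ᵥ k = 0) (hnil : (G⁻¹ * ρ) ^ 2 = 0) :
    ρ = (l ⬝ᵥ ρ *ᵥ l) • vecMulVec (G *ᵥ k) (G *ᵥ k) := by
  refine hF.eq_smul_vecMulVec_of_isSymm hρ hk (or_self_iff.1 (vecMulVec_eq_zero.1 ?_))
  have hGG : G * G⁻¹ = 1 := mul_nonsing_inv _ (isUnit_det_of_right_inverse hF.mul_inverse)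
  calc vecMulVec (ρ *ᵥ e) (ρ *ᵥ e)
    _ = ρ * G⁻¹ * ρ := by
      rw [inv_eq_right_inv hF.mul_inverse]
      simp only [mul_add, add_mul, mul_vecMulVec, vecMulVec_mul, ← mulVec_transpose, hρ.eq, hk,
        zero_vecMulVec, vecMulVec_zero, zero_add]
    _ = G * (G⁻¹ * ρ) ^ 2 := by
      rw [pow_two, ← Matrix.mul_assoc G, ← Matrix.mul_assoc G, hGG, Matrix.one_mul,
        Matrix.mul_assoc]
    _ = 0 := by rw [hnil, Matrix.mul_zero]

theorem curvature_of_ricci (hF : IsNullFrame G k l e) {A B : Matrix (Fin 3) (Fin 3) ℝ} {ν : ℝ}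
    (hA : Aᵀ = -A) (hB : Bᵀ = -B)
    (hric : vecMulVec (G *ᵥ l) (k ᵥ* A) + vecMulVec (G *ᵥ e) (k ᵥ* B) -
      vecMulVec (G *ᵥ k) (l ᵥ* A + e ᵥ* B) = ν • vecMulVec (G *ᵥ k) (G *ᵥ k)) :
    A = 0 ∧ B = ν • wedge (G *ᵥ k) (G *ᵥ e) := by
  have contract (x : Fin 3 → ℝ) : (x ⬝ᵥ G *ᵥ l) • (k ᵥ* A) + (x ⬝ᵥ G *ᵥ e) • (k ᵥ* B) -
      (x ⬝ᵥ G *ᵥ k) • (l ᵥ* A + e ᵥ* B) = (ν * (x ⬝ᵥ G *ᵥ k)) • (G *ᵥ k) := by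
    simpa only [vecMul_sub, vecMul_add, vecMul_smul, vecMul_vecMulVec, smul_smul] using
      congr(x ᵥ* $hric)
  have hkA : A *ᵥ k = 0 := by
    have : k ᵥ* A = 0 := by simpa [hF.kl, hF.ke, hF.kk] using contract k
    rwa [← mulVec_transpose, hA, neg_mulVec, neg_eq_zero] at this
  have hkB : B *ᵥ k = 0 := by
    have : k ᵥ* B = 0 := by simpa [hF.el, hF.ee, hF.ek] using contract e
    rwa [← mulVec_transpose, hB, neg_mulVec, neg_eq_zero] at this
  have hl (x : Fin 3 → ℝ) : l ⬝ᵥ A *ᵥ x + e ⬝ᵥ B *ᵥ x = -(ν * (G *ᵥ k ⬝ᵥ x)) := by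
    have : -(l ᵥ* A + e ᵥ* B) = ν • G *ᵥ k := by
      simpa [hF.ll, hF.le, hF.lk] using contract l
    rw [dotProduct_mulVec, dotProduct_mulVec, ← add_dotProduct, ← smul_eq_mul, ← smul_dotProduct,
      ← this, neg_dotProduct, neg_neg]
  have hlAe : l ⬝ᵥ A *ᵥ e = 0 := by
    simpa [dotProduct_mulVec_self_of_transpose_eq_neg hB, dotProduct_comm _ e, hF.ek] using hl e
  have hlBe : l ⬝ᵥ B *ᵥ e = ν := by
    simpa [dotProduct_mulVec_self_of_transpose_eq_neg hA, dotProduct_comm _ l, hF.lk,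
      dotProduct_mulVec_comm_of_transpose_eq_neg hB e l] using hl l
  exact ⟨by rw [hF.eq_smul_wedge_of_transpose_eq_neg hA hkA, hlAe, zero_smul],
    by rw [hF.eq_smul_wedge_of_transpose_eq_neg hB hkB, hlBe]⟩

end IsNullFrame

end NullFrames

section StructureEquations

variable {n : ℕ} {B : Set (Pt n)} {g : Pt n → Fin n → Fin n → ℝ} {θ φ c : Pt n → Fin n → ℝ}
  {f : Pt n → ℝ} {p : Pt n}

lemma nablaForm_add (hθ : DifferentiableAt ℝ θ p) (hφ : DifferentiableAt ℝ φ p) (i : Fin n) :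
    nablaForm g i (fun q => θ q + φ q) p = nablaForm g i θ p + nablaForm g i φ p := by
  rw [differentiableAt_pi] at hθ hφ
  have hpd : pdVec i (fun q => θ q + φ q) p = pdVec i θ p + pdVec i φ p :=
    funext fun j => pd_add (hθ j) (hφ j) i
  rw [nablaForm, nablaForm, nablaForm, hpd, mulVec_add]
  abel

lemma nablaForm_neg (θ : Pt n → Fin n → ℝ) (p : Pt n) (i : Fin n) :
    nablaForm g i (fun q => -θ q) p = -nablaForm g i θ p := by
  have hpd : pdVec i (fun q => -θ q) p = -pdVec i θ p :=
    funext fun j => by simp [pdVec, pd]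
  rw [nablaForm, nablaForm, hpd, mulVec_neg]
  abel

lemma nablaForm_smul (hf : DifferentiableAt ℝ f p) (hθ : DifferentiableAt ℝ θ p) (i : Fin n) :
    nablaForm g i (fun q => f q • θ q) p = pd i f p • θ p + f p • nablaForm g i θ p := by
  have hpd : pdVec i (fun q => f q • θ q) p = pd i f p • θ p + f p • pdVec i θ p :=
    funext fun j => pd_mul hf (differentiableAt_pi.1 hθ j) i
  rw [nablaForm, nablaForm, hpd, mulVec_smul, smul_sub]
  abel

/-- The exterior covariant derivative of the form-valued 1-form `c ⊗ φ`. -/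
lemma nablaForm_smul_sub_nablaForm_smul (hc : DifferentiableAt ℝ c p)
    (hφ : DifferentiableAt ℝ φ p) (i j : Fin n) :
    nablaForm g j (fun q => c q i • φ q) p - nablaForm g i (fun q => c q j • φ q) p =
      c p i • nablaForm g j φ p - c p j • nablaForm g i φ p - extD c p i j • φ p := by
  rw [differentiableAt_pi] at hc
  rw [nablaForm_smul (hc i) hφ, nablaForm_smul (hc j) hφ, extD, of_apply, sub_smul]
  abel

lemma extD_apply_eq_nablaForm_sub (hg : IsMetricOn g B) (hB : IsOpen B) (hp : p ∈ B)
    (θ : Pt n → Fin n → ℝ) (i j : Fin n) :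
    extD θ p i j = nablaForm g i θ p j - nablaForm g j θ p i := by
  have hsymm : ((connMatrix g i p)ᵀ *ᵥ θ p) j = ((connMatrix g j p)ᵀ *ᵥ θ p) i := by
    simp only [mulVec, dotProduct, transpose_apply, connMatrix, of_apply,
      hg.chr_symm hB hp _ i j]
  simp only [extD, nablaForm, of_apply, Pi.sub_apply, hsymm, sub_sub_sub_cancel_right]
  rfl

lemma extD_transpose (θ : Pt n → Fin n → ℝ) (p : Pt n) : (extD θ p)ᵀ = -extD θ p := by
  ext i j
  simp [extD]

lemma wedge_transpose (a b : Fin n → ℝ) : (wedge a b)ᵀ = -wedge a b := by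
  rw [wedge, transpose_sub, transpose_vecMulVec, transpose_vecMulVec, neg_sub]

end StructureEquations

section RecurrentNullFrame

/-- `(k, l, e)` is a smooth null frame field on `B` whose lightlike leg `k` is recurrent, with
recurrence form `a`, that is `∇k = a ⊗ k`. -/
structure IsRecurrentNullFrame (g : Pt 3 → Fin 3 → Fin 3 → ℝ) (B : Set (Pt 3))
    (k l e a : Pt 3 → Fin 3 → ℝ) : Prop where
  contDiffOn_k : ContDiffOn ℝ ∞ k B
  contDiffOn_l : ContDiffOn ℝ ∞ l B
  contDiffOn_e : ContDiffOn ℝ ∞ e B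
  contDiffOn_a : ContDiffOn ℝ ∞ a B
  isNullFrame : ∀ p ∈ B, IsNullFrame (Matrix.of (g p)) (k p) (l p) (e p)
  nablaForm_k : ∀ p ∈ B, ∀ i, nablaForm g i (lower g k) p = a p i • lower g k p

/-- A null coframe `g = n ⊗ la + la ⊗ n + ε ⊗ ε` satisfying Cartan's structure equations, with
connection forms `a` and `b`, for a metric whose Ricci tensor is `ν n ⊗ n`. -/
structure IsNullCoframe (g : Pt 3 → Fin 3 → Fin 3 → ℝ) (B : Set (Pt 3))
    (n la ε a b : Pt 3 → Fin 3 → ℝ) (ν : Pt 3 → ℝ) : Prop where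
  contDiffOn_n : ContDiffOn ℝ ∞ n B
  contDiffOn_la : ContDiffOn ℝ ∞ la B
  contDiffOn_ε : ContDiffOn ℝ ∞ ε B
  contDiffOn_a : ContDiffOn ℝ ∞ a B
  contDiffOn_b : ContDiffOn ℝ ∞ b B
  metric_eq : ∀ p ∈ B, Matrix.of (g p) =
    vecMulVec (n p) (la p) + vecMulVec (la p) (n p) + vecMulVec (ε p) (ε p)
  extD_n : ∀ p ∈ B, extD n p = wedge (a p) (n p)
  extD_la : ∀ p ∈ B, extD la p = -wedge (a p) (la p) - wedge (b p) (ε p)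
  extD_ε : ∀ p ∈ B, extD ε p = wedge (b p) (n p)
  extD_a : ∀ p ∈ B, extD a p = 0
  extD_b : ∀ p ∈ B, extD b p = ν p • wedge (n p) (ε p) - wedge (a p) (b p)

/-- The connection form `b = g(∇e, l)` of a recurrent null frame. -/
def normalConnForm (g : Pt 3 → Fin 3 → Fin 3 → ℝ) (l e : Pt 3 → Fin 3 → ℝ) (p : Pt 3) :
    Fin 3 → ℝ :=
  fun i => l p ⬝ᵥ nablaForm g i (lower g e) p

namespace IsRecurrentNullFrame

variable {B : Set (Pt 3)} {g : Pt 3 → Fin 3 → Fin 3 → ℝ} {k l e a : Pt 3 → Fin 3 → ℝ} {p : Pt 3}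

lemma contDiffOn_normalConnForm (hK : IsRecurrentNullFrame g B k l e a) (hg : IsMetricOn g B)
    (hB : IsOpen B) : ContDiffOn ℝ ∞ (normalConnForm g l e) B :=
  contDiffOn_pi.2 fun i => contDiffOn_dotProduct hK.contDiffOn_l
    (hg.contDiffOn_nablaForm hB (hg.contDiffOn_lower hK.contDiffOn_e) i)

lemma nablaForm_e (hK : IsRecurrentNullFrame g B k l e a) (hg : IsMetricOn g B) (hB : IsOpen B)
    (hp : p ∈ B) (i : Fin 3) :
    nablaForm g i (lower g e) p = normalConnForm g l e p i • lower g k p := by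
  have hF := hK.isNullFrame p hp
  have hke : k p ⬝ᵥ nablaForm g i (lower g e) p = 0 := by
    rw [hg.dotProduct_nablaForm_eq_neg hB hK.contDiffOn_k hK.contDiffOn_e
      (fun q hq => (hK.isNullFrame q hq).ke) hp, hK.nablaForm_k p hp, dotProduct_smul, lower,
      hF.ek, smul_zero, neg_zero]
  have hee : e p ⬝ᵥ nablaForm g i (lower g e) p = 0 :=
    hg.dotProduct_nablaForm_self hB hK.contDiffOn_e (fun q hq => (hK.isNullFrame q hq).ee) hp i
  rw [hF.covector_eq (nablaForm g i (lower g e) p), hke, hee, zero_smul, zero_smul, zero_add,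
    add_zero]
  rfl

lemma nablaForm_l (hK : IsRecurrentNullFrame g B k l e a) (hg : IsMetricOn g B) (hB : IsOpen B)
    (hp : p ∈ B) (i : Fin 3) :
    nablaForm g i (lower g l) p =
      -(a p i • lower g l p + normalConnForm g l e p i • lower g e p) := by
  have hF := hK.isNullFrame p hp
  have hkl : k p ⬝ᵥ nablaForm g i (lower g l) p = -a p i := by
    rw [hg.dotProduct_nablaForm_eq_neg hB hK.contDiffOn_k hK.contDiffOn_l
      (fun q hq => (hK.isNullFrame q hq).kl) hp, hK.nablaForm_k p hp, dotProduct_smul, lower,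
      hF.lk, smul_eq_mul, mul_one]
  have hll : l p ⬝ᵥ nablaForm g i (lower g l) p = 0 :=
    hg.dotProduct_nablaForm_self hB hK.contDiffOn_l (fun q hq => (hK.isNullFrame q hq).ll) hp i
  have hel : e p ⬝ᵥ nablaForm g i (lower g l) p = -normalConnForm g l e p i :=
    hg.dotProduct_nablaForm_eq_neg hB hK.contDiffOn_e hK.contDiffOn_l
      (fun q hq => (hK.isNullFrame q hq).el) hp i
  rw [hF.covector_eq (nablaForm g i (lower g l) p), hkl, hll, hel, lower, lower]
  module

lemma curvMatrix_k (hK : IsRecurrentNullFrame g B k l e a) (hg : IsMetricOn g B) (hB : IsOpen B)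
    (hp : p ∈ B) (i j : Fin 3) :
    (curvMatrix g i j p)ᵀ *ᵥ lower g k p = -extD a p i j • lower g k p := by
  have hk := hg.contDiffOn_lower hK.contDiffOn_k
  rw [curvMatrix_transpose_mulVec hg hB hp hk,
    nablaForm_congr_of_eqOn hB (fun q hq => hK.nablaForm_k q hq i) hp,
    nablaForm_congr_of_eqOn hB (fun q hq => hK.nablaForm_k q hq j) hp,
    nablaForm_smul_sub_nablaForm_smul (differentiableAt_of_contDiffOn hK.contDiffOn_a hB hp)
      (differentiableAt_of_contDiffOn hk hB hp),
    hK.nablaForm_k p hp, hK.nablaForm_k p hp]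
  module

lemma curvMatrix_e (hK : IsRecurrentNullFrame g B k l e a) (hg : IsMetricOn g B) (hB : IsOpen B)
    (hp : p ∈ B) (i j : Fin 3) :
    (curvMatrix g i j p)ᵀ *ᵥ lower g e p =
      -(extD (normalConnForm g l e) p + wedge (a p) (normalConnForm g l e p)) i j •
        lower g k p := by
  rw [curvMatrix_transpose_mulVec hg hB hp (hg.contDiffOn_lower hK.contDiffOn_e),
    nablaForm_congr_of_eqOn hB (fun q hq => hK.nablaForm_e hg hB hq i) hp,
    nablaForm_congr_of_eqOn hB (fun q hq => hK.nablaForm_e hg hB hq j) hp,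
    nablaForm_smul_sub_nablaForm_smul
      (differentiableAt_of_contDiffOn (hK.contDiffOn_normalConnForm hg hB) hB hp)
      (differentiableAt_of_contDiffOn (hg.contDiffOn_lower hK.contDiffOn_k) hB hp),
    hK.nablaForm_k p hp, hK.nablaForm_k p hp, Matrix.add_apply, wedge_apply]
  module

lemma curvMatrix_l (hK : IsRecurrentNullFrame g B k l e a) (hg : IsMetricOn g B) (hB : IsOpen B)
    (hp : p ∈ B) (i j : Fin 3) :
    (curvMatrix g i j p)ᵀ *ᵥ lower g l p = extD a p i j • lower g l p +
      (extD (normalConnForm g l e) p + wedge (a p) (normalConnForm g l e p)) i j •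
        lower g e p := by
  have hl := differentiableAt_of_contDiffOn (hg.contDiffOn_lower hK.contDiffOn_l) hB hp
  have he := differentiableAt_of_contDiffOn (hg.contDiffOn_lower hK.contDiffOn_e) hB hp
  have ha := differentiableAt_of_contDiffOn hK.contDiffOn_a hB hp
  have hb := differentiableAt_of_contDiffOn (hK.contDiffOn_normalConnForm hg hB) hB hp
  have hnabla (i j : Fin 3) : nablaForm g j (nablaForm g i (lower g l)) p =
      -(nablaForm g j (fun q => a q i • lower g l q) p +
        nablaForm g j (fun q => normalConnForm g l e q i • lower g e q) p) := by
    rw [nablaForm_congr_of_eqOn hB (fun q hq => hK.nablaForm_l hg hB hq i) hp, nablaForm_neg,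
      nablaForm_add ((differentiableAt_pi.1 ha i).fun_smul hl)
        ((differentiableAt_pi.1 hb i).fun_smul he)]
  have hal := nablaForm_smul_sub_nablaForm_smul (g := g) ha hl i j
  have hbe := nablaForm_smul_sub_nablaForm_smul (g := g) hb he i j
  rw [curvMatrix_transpose_mulVec hg hB hp (hg.contDiffOn_lower hK.contDiffOn_l), hnabla, hnabla,
    Matrix.add_apply, wedge_apply]
  simp only [hK.nablaForm_l hg hB hp, hK.nablaForm_e hg hB hp] at hal hbe
  linear_combination (norm := module) -hal - hbe

theorem RicciT_eq (hK : IsRecurrentNullFrame g B k l e a) (hg : IsMetricOn g B) (hB : IsOpen B)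
    (hp : p ∈ B) :
    (Matrix.of fun i j => RicciT g i j p) =
      vecMulVec (lower g l p) (k p ᵥ* extD a p) +
        vecMulVec (lower g e p)
          (k p ᵥ* (extD (normalConnForm g l e) p + wedge (a p) (normalConnForm g l e p))) -
        vecMulVec (lower g k p) (l p ᵥ* extD a p +
          e p ᵥ* (extD (normalConnForm g l e) p + wedge (a p) (normalConnForm g l e p))) := by
  set A := extD a p
  set β := extD (normalConnForm g l e) p + wedge (a p) (normalConnForm g l e p)
  ext m j
  have hcurv (i : Fin 3) : (curvMatrix g i j p)ᵀ =
      vecMulVec (A i j • lower g l p + β i j • lower g e p) (k p) +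
        vecMulVec (-A i j • lower g k p) (l p) + vecMulVec (-β i j • lower g k p) (e p) := by
    have hres := (hK.isNullFrame p hp).resolution
    replace hres := congr((curvMatrix g i j p)ᵀ * ($hres)ᵀ)
    simp only [transpose_add, transpose_vecMulVec, mul_add, mul_vecMulVec, transpose_one,
      mul_one] at hres
    rw [← hres, ← hK.curvMatrix_l hg hB hp, ← hK.curvMatrix_k hg hB hp,
      ← hK.curvMatrix_e hg hB hp]
    rfl
  calc RicciT g m j p
    _ = ∑ i, (curvMatrix g i j p)ᵀ m i := RicciT_eq_sum_RiemUp hg hB hp m j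
    _ = _ := by
      simp only [hcurv, Matrix.add_apply, Matrix.sub_apply, vecMulVec_apply, Pi.add_apply,
        Pi.smul_apply, smul_eq_mul, vecMul, dotProduct, Fin.sum_univ_three]
      ring

theorem isNullCoframe (hK : IsRecurrentNullFrame g B k l e a) (hg : IsMetricOn g B)
    (hB : IsOpen B) {ν : Pt 3 → ℝ}
    (hric : ∀ p ∈ B, (Matrix.of fun i j => RicciT g i j p) =
      ν p • vecMulVec (lower g k p) (lower g k p)) :
    IsNullCoframe g B (lower g k) (lower g l) (lower g e) a (normalConnForm g l e) ν := by
  have hcurv (p) (hp : p ∈ B) : extD a p = 0 ∧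
      extD (normalConnForm g l e) p + wedge (a p) (normalConnForm g l e p) =
        ν p • wedge (lower g k p) (lower g e p) :=
    (hK.isNullFrame p hp).curvature_of_ricci (extD_transpose a p)
      (by rw [transpose_add, extD_transpose, wedge_transpose, neg_add])
      ((hK.RicciT_eq hg hB hp).symm.trans (hric p hp))
  have hextD (θ : Pt 3 → Fin 3 → ℝ) {p} (hp : p ∈ B) (i j : Fin 3) :
      extD θ p i j = nablaForm g i θ p j - nablaForm g j θ p i :=
    extD_apply_eq_nablaForm_sub hg hB hp θ i j
  refine
    { contDiffOn_n := hg.contDiffOn_lower hK.contDiffOn_k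
      contDiffOn_la := hg.contDiffOn_lower hK.contDiffOn_l
      contDiffOn_ε := hg.contDiffOn_lower hK.contDiffOn_e
      contDiffOn_a := hK.contDiffOn_a
      contDiffOn_b := hK.contDiffOn_normalConnForm hg hB
      metric_eq := fun p hp => (hK.isNullFrame p hp).matrix_eq _
      extD_n := fun p hp => ?_
      extD_la := fun p hp => ?_
      extD_ε := fun p hp => ?_
      extD_a := fun p hp => (hcurv p hp).1
      extD_b := fun p hp => eq_sub_of_add_eq (hcurv p hp).2 } <;> ext i j
  · simp only [hextD _ hp, hK.nablaForm_k p hp, wedge_apply, Pi.smul_apply, smul_eq_mul]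
    ring
  · simp only [hextD _ hp, hK.nablaForm_l hg hB hp, wedge_apply, Pi.smul_apply, smul_eq_mul,
      Pi.neg_apply, Pi.add_apply, Matrix.sub_apply, Matrix.neg_apply]
    ring
  · simp only [hextD _ hp, hK.nablaForm_e hg hB hp, wedge_apply, Pi.smul_apply, smul_eq_mul]
    ring

end IsRecurrentNullFrame

end RecurrentNullFrame

section IsotropicSolutions

/-- `g` and `h` form an isotropic solution on `D` of the vacuum weighted Einstein field equation
whose Ricci operator is nilpotent of step at most two. The density may have either sign and the
cosmological term `Λ` may vary from point to point. -/
structure IsIsotropicTwoStep (g : Pt 3 → Fin 3 → Fin 3 → ℝ) (h Λ : Pt 3 → ℝ) (D : Set (Pt 3)) :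
    Prop where
  contDiffOn_metric : ∀ i j, ContDiffOn ℝ ∞ (fun p => g p i j) D
  isLorentz3 : ∀ p ∈ D, IsLorentz3 (Matrix.of (g p))
  contDiffOn_density : ContDiffOn ℝ ∞ h D
  density_ne_zero : ∀ p ∈ D, h p ≠ 0
  wefe : ∀ p ∈ D, WEFEat g h (Λ p) p
  gradNorm2_eq_zero : ∀ p ∈ D, gradNorm2 g h p = 0
  gradV_ne_zero : ∀ p ∈ D, gradV g h p ≠ 0
  ricOp_sq : ∀ p ∈ D, RicOpM g p ^ 2 = 0

lemma contDiffOn_nullPartner {B : Set (Pt 3)} {g : Pt 3 → Fin 3 → Fin 3 → ℝ}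
    {k w : Pt 3 → Fin 3 → ℝ} (hg : IsMetricOn g B) (hk : ContDiffOn ℝ ∞ k B)
    (hw : ContDiffOn ℝ ∞ w B) (hkw : ∀ q ∈ B, w q ⬝ᵥ lower g k q ≠ 0) :
    ContDiffOn ℝ ∞ (fun q => nullPartner (Matrix.of (g q)) (k q) (w q)) B := by
  have hwk := contDiffOn_dotProduct hw (hg.contDiffOn_lower hk)
  have hww := contDiffOn_dotProduct hw (hg.contDiffOn_lower hw)
  exact (hwk.inv hkw).smul (hw.sub ((hww.div (contDiffOn_const.mul hwk)
    fun q hq => mul_ne_zero two_ne_zero (hkw q hq)).smul hk))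

lemma contDiffOn_nullNormal {B : Set (Pt 3)} {g : Pt 3 → Fin 3 → Fin 3 → ℝ}
    {k l : Pt 3 → Fin 3 → ℝ} (hg : IsMetricOn g B) (hdet : ∀ q ∈ B, (Matrix.of (g q)).det < 0)
    (hk : ContDiffOn ℝ ∞ k B) (hl : ContDiffOn ℝ ∞ l B) :
    ContDiffOn ℝ ∞ (fun q => nullNormal (Matrix.of (g q)) (k q) (l q)) B := by
  have hn := contDiffOn_pi.1 (hg.contDiffOn_lower hk)
  have hla := contDiffOn_pi.1 (hg.contDiffOn_lower hl)
  have hcross : ContDiffOn ℝ ∞ (fun q => lower g k q ⨯₃ lower g l q) B := by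
    simp only [cross_apply]
    refine contDiffOn_pi.2 fun i => ?_
    fin_cases i <;>
      exact ((hn _).mul (hla _)).sub ((hn _).mul (hla _))
  have hneg (q) (hq : q ∈ B) : 0 < -(Matrix.of (g q)).det := neg_pos.2 (hdet q hq)
  exact (((contDiffOn_det hg.contDiffOn).neg.sqrt fun q hq => (hneg q hq).ne').inv
    fun q hq => (Real.sqrt_pos.2 (hneg q hq)).ne').smul hcross

namespace IsIsotropicTwoStep

variable {D : Set (Pt 3)} {g : Pt 3 → Fin 3 → Fin 3 → ℝ} {h Λ : Pt 3 → ℝ} {p : Pt 3}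

lemma isMetricOn (hs : IsIsotropicTwoStep g h Λ D) : IsMetricOn g D :=
  ⟨hs.contDiffOn_metric, fun p hp => (hs.isLorentz3 p hp).1,
    fun p hp => (det_neg_of_isLorentz3 (hs.isLorentz3 p hp)).ne⟩

lemma mono {B : Set (Pt 3)} (hs : IsIsotropicTwoStep g h Λ D) (hBD : B ⊆ D) :
    IsIsotropicTwoStep g h Λ B where
  contDiffOn_metric i j := (hs.contDiffOn_metric i j).mono hBD
  isLorentz3 p hp := hs.isLorentz3 p (hBD hp)
  contDiffOn_density := hs.contDiffOn_density.mono hBD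
  density_ne_zero p hp := hs.density_ne_zero p (hBD hp)
  wefe p hp := hs.wefe p (hBD hp)
  gradNorm2_eq_zero p hp := hs.gradNorm2_eq_zero p (hBD hp)
  gradV_ne_zero p hp := hs.gradV_ne_zero p (hBD hp)
  ricOp_sq p hp := hs.ricOp_sq p (hBD hp)

lemma gradV_dotProduct_lower (hs : IsIsotropicTwoStep g h Λ D) (hp : p ∈ D) :
    gradV g h p ⬝ᵥ lower g (gradV g h) p = 0 := by
  rw [hs.isMetricOn.lower_gradV hp, ← hs.gradNorm2_eq_zero p hp, gradNorm2]
  refine Finset.sum_congr rfl fun i _ => (Finset.sum_mul _ _ _).trans ?_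
  exact Finset.sum_congr rfl fun j _ => mul_right_comm _ _ _

lemma Hess_mulVec_gradV (hs : IsIsotropicTwoStep g h Λ D) (hD : IsOpen D) (hp : p ∈ D) :
    (Matrix.of fun i j => Hess g h i j p) *ᵥ gradV g h p = 0 := by
  have hg := hs.isMetricOn
  ext i
  have hself := hg.dotProduct_nablaForm_self hD (hg.contDiffOn_gradV hD hs.contDiffOn_density)
    (fun q hq => hs.gradV_dotProduct_lower hq) hp i
  rw [nablaForm_congr_of_eqOn hD (fun q hq => hg.lower_gradV hq h) hp, dotProduct_comm] at hself
  exact hself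

theorem Hess_eq_and_RicciT_eq (hs : IsIsotropicTwoStep g h Λ D) (hD : IsOpen D) (hp : p ∈ D)
    {l e : Fin 3 → ℝ} (hF : IsNullFrame (Matrix.of (g p)) (gradV g h p) l e) {μ : ℝ}
    (hμ : μ = l ⬝ᵥ (Matrix.of fun i j => Hess g h i j p) *ᵥ l) :
    (Matrix.of fun i j => Hess g h i j p) =
        μ • vecMulVec (lower g (gradV g h) p) (lower g (gradV g h) p) ∧
      (Matrix.of fun i j => RicciT g i j p) =
        (μ / h p) • vecMulVec (lower g (gradV g h) p) (lower g (gradV g h) p) := by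
  set H := Matrix.of fun i j => Hess g h i j p
  set ρ := Matrix.of fun i j => RicciT g i j p
  have hh := hs.density_ne_zero p hp
  have hHk : H *ᵥ gradV g h p = 0 := hs.Hess_mulVec_gradV hD hp
  have hwefe : h p • ρ - H + (Lap g h p + Λ p) • Matrix.of (g p) = 0 := by
    ext i j
    exact hs.wefe p hp i j
  have hnil : ((Matrix.of (g p))⁻¹ * ρ) ^ 2 = 0 := hs.ricOp_sq p hp
  have hHρ : h p • ρ = H := hF.smul_eq_of_nilpotent hwefe hHk hnil
  have hρH : ρ = (h p)⁻¹ • H := by rw [← hHρ, inv_smul_smul₀ hh]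
  have hρ : ρ.IsSymm := hρH ▸ (hs.isMetricOn.isSymm_Hess hD hs.contDiffOn_density hp).smul _
  have hρk : ρ *ᵥ gradV g h p = 0 := by rw [hρH, smul_mulVec, hHk, smul_zero]
  have hρl : l ⬝ᵥ ρ *ᵥ l = μ / h p := by
    rw [hρH, smul_mulVec, dotProduct_smul, ← hμ, smul_eq_mul, inv_mul_eq_div]
  have hρ_eq := hF.eq_smul_vecMulVec_of_nilpotent hρ hρk hnil
  rw [hρl] at hρ_eq
  refine ⟨?_, hρ_eq⟩
  rw [← hHρ, hρ_eq, smul_smul, mul_div_cancel₀ _ hh]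
  rfl

theorem exists_isNullFrame (hs : IsIsotropicTwoStep g h Λ D) (hD : IsOpen D) (hp : p ∈ D) :
    ∃ (B : Set (Pt 3)) (l e : Pt 3 → Fin 3 → ℝ), IsOpen B ∧ Convex ℝ B ∧ p ∈ B ∧ B ⊆ D ∧
      ContDiffOn ℝ ∞ l B ∧ ContDiffOn ℝ ∞ e B ∧
      ∀ q ∈ B, IsNullFrame (Matrix.of (g q)) (gradV g h q) (l q) (e q) := by
  have hk := hs.isMetricOn.contDiffOn_gradV hD hs.contDiffOn_density
  obtain ⟨w, hw⟩ : ∃ w, w ⬝ᵥ lower g (gradV g h) p ≠ 0 := by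
    by_contra! hzero
    exact hs.gradV_ne_zero p hp <| eq_zero_of_mulVec_eq_zero (hs.isMetricOn.det_ne_zero p hp) <|
      dotProduct_eq_zero _ fun w => (dotProduct_comm _ _).trans (hzero w)
  have hwk : ContinuousOn (fun q => w ⬝ᵥ lower g (gradV g h) q) D :=
    (contDiffOn_dotProduct contDiffOn_const (hs.isMetricOn.contDiffOn_lower hk)).continuousOn
  obtain ⟨r, hr, hball⟩ := Metric.isOpen_iff.1
    (hwk.isOpen_inter_preimage hD (isOpen_ne (x := (0 : ℝ)))) p ⟨hp, hw⟩
  have hBD : Metric.ball p r ⊆ D := fun q hq => (hball hq).1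
  have hsB := hs.mono hBD
  have hdet (q) (hq : q ∈ Metric.ball p r) := det_neg_of_isLorentz3 (hsB.isLorentz3 q hq)
  have hl : ContDiffOn ℝ ∞ (fun q => nullPartner (Matrix.of (g q)) (gradV g h q) w)
      (Metric.ball p r) :=
    contDiffOn_nullPartner hsB.isMetricOn (hk.mono hBD) contDiffOn_const fun q hq => (hball hq).2
  exact ⟨Metric.ball p r, _, _, Metric.isOpen_ball, convex_ball p r, Metric.mem_ball_self hr, hBD,
    hl, contDiffOn_nullNormal hsB.isMetricOn hdet (hk.mono hBD) hl,
    fun q hq => isNullFrame_nullPartner_nullNormal (hsB.isLorentz3 q hq).1 (hdet q hq)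
      (hsB.gradV_dotProduct_lower hq) (hball hq).2⟩

lemma differential_density_ne_zero (hs : IsIsotropicTwoStep g h Λ D) (hp : p ∈ D) :
    differential h p ≠ 0 := by
  rw [← hs.isMetricOn.lower_gradV hp]
  exact fun h0 => hs.gradV_ne_zero p hp
    (eq_zero_of_mulVec_eq_zero (hs.isMetricOn.det_ne_zero p hp) h0)

lemma RicOpM_eq_zero_iff (hs : IsIsotropicTwoStep g h Λ D) (hp : p ∈ D) {μ : ℝ}
    (hρ : (Matrix.of fun i j => RicciT g i j p) =
      (μ / h p) • vecMulVec (lower g (gradV g h) p) (lower g (gradV g h) p)) :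
    RicOpM g p = 0 ↔ μ = 0 := by
  have hdet := hs.isMetricOn.det_ne_zero p hp
  have hlower : lower g (gradV g h) p ≠ 0 :=
    hs.isMetricOn.lower_gradV hp h ▸ hs.differential_density_ne_zero hp
  have hunit : IsUnit (ginv g p) := (isUnit_nonsing_inv_iff.2 ((isUnit_iff_isUnit_det _).2
    hdet.isUnit))
  calc RicOpM g p = 0
    _ ↔ ginv g p * (Matrix.of fun i j => RicciT g i j p) = 0 := Iff.rfl
    _ ↔ (Matrix.of fun i j => RicciT g i j p) = 0 := hunit.mul_right_eq_zero
    _ ↔ μ = 0 := by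
      rw [hρ, smul_eq_zero_iff_left (by simpa [vecMulVec_eq_zero] using hlower), div_eq_zero_iff,
        or_iff_left (hs.density_ne_zero p hp)]

theorem exists_isNullCoframe (hs : IsIsotropicTwoStep g h Λ D) (hD : IsOpen D) (hp : p ∈ D) :
    ∃ (B : Set (Pt 3)) (la ε b : Pt 3 → Fin 3 → ℝ) (μ : Pt 3 → ℝ), IsOpen B ∧ Convex ℝ B ∧
      p ∈ B ∧ B ⊆ D ∧
      IsNullCoframe g B (lower g (gradV g h)) la ε (fun q => μ q • lower g (gradV g h) q) b
        (fun q => μ q / h q) ∧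
      ∀ q ∈ B, RicOpM g q = 0 ↔ μ q = 0 := by
  obtain ⟨B, l, e, hB, hBc, hpB, hBD, hl, he, hF⟩ := hs.exists_isNullFrame hD hp
  have hsB := hs.mono hBD
  have hg := hsB.isMetricOn
  have hk := hg.contDiffOn_gradV hB hsB.contDiffOn_density
  let μ (q : Pt 3) : ℝ := l q ⬝ᵥ (Matrix.of fun i j => Hess g h i j q) *ᵥ l q
  have hμ : ContDiffOn ℝ ∞ μ B :=
    contDiffOn_dotProduct hl <| contDiffOn_pi.2 fun i => contDiffOn_dotProduct
      (hg.contDiffOn_nablaForm hB (contDiffOn_differential hsB.contDiffOn_density hB) i) hl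
  have hHρ (q) (hq : q ∈ B) := hsB.Hess_eq_and_RicciT_eq hB hq (hF q hq) (μ := μ q) rfl
  have hrec : IsRecurrentNullFrame g B (gradV g h) l e fun q => μ q • lower g (gradV g h) q :=
    { contDiffOn_k := hk
      contDiffOn_l := hl
      contDiffOn_e := he
      contDiffOn_a := hμ.smul (hg.contDiffOn_lower hk)
      isNullFrame := hF
      nablaForm_k := fun q hq i => by
        rw [nablaForm_congr_of_eqOn hB (fun r hr => hg.lower_gradV hr h) hq]
        ext j
        rw [nablaForm_differential]
        exact congr($((hHρ q hq).1) i j).trans (mul_assoc _ _ _).symm }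
  exact ⟨B, _, _, _, μ, hB, hBc, hpB, hBD, hrec.isNullCoframe hg hB fun q hq => (hHρ q hq).2,
    fun q hq => hsB.RicOpM_eq_zero_iff hq (hHρ q hq).2⟩

end IsIsotropicTwoStep

end IsotropicSolutions

section PlaneWaveCoordinates

lemma IsNullCoframe.mono {g : Pt 3 → Fin 3 → Fin 3 → ℝ} {B B' : Set (Pt 3)}
    {n la ε a b : Pt 3 → Fin 3 → ℝ} {ν : Pt 3 → ℝ} (hC : IsNullCoframe g B n la ε a b ν)
    (hB' : B' ⊆ B) : IsNullCoframe g B' n la ε a b ν where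
  contDiffOn_n := hC.contDiffOn_n.mono hB'
  contDiffOn_la := hC.contDiffOn_la.mono hB'
  contDiffOn_ε := hC.contDiffOn_ε.mono hB'
  contDiffOn_a := hC.contDiffOn_a.mono hB'
  contDiffOn_b := hC.contDiffOn_b.mono hB'
  metric_eq p hp := hC.metric_eq p (hB' hp)
  extD_n p hp := hC.extD_n p (hB' hp)
  extD_la p hp := hC.extD_la p (hB' hp)
  extD_ε p hp := hC.extD_ε p (hB' hp)
  extD_a p hp := hC.extD_a p (hB' hp)
  extD_b p hp := hC.extD_b p (hB' hp)

theorem IsNullCoframe.boost {g : Pt 3 → Fin 3 → Fin 3 → ℝ} {B : Set (Pt 3)}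
    {n la ε a b : Pt 3 → Fin 3 → ℝ} {ν f v : Pt 3 → ℝ} (hC : IsNullCoframe g B n la ε a b ν)
    (hB : IsOpen B) (hf : ContDiffOn ℝ ∞ f B) (hv : ContDiffOn ℝ ∞ v B)
    (hdf : ∀ p ∈ B, differential f p = a p)
    (hn : ∀ p ∈ B, n p = Real.exp (f p) • differential v p) :
    IsNullCoframe g B (differential v) (fun p => Real.exp (f p) • la p) ε 0
      (fun p => Real.exp (f p) • b p) (fun p => Real.exp (f p) ^ 2 * ν p) := by
  have extD_boost {θ : Pt 3 → Fin 3 → ℝ} (hθ : ContDiffOn ℝ ∞ θ B) {p} (hp : p ∈ B) :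
      extD (fun q => Real.exp (f q) • θ q) p = Real.exp (f p) • (wedge (a p) (θ p) + extD θ p) := by
    have hfp := differentiableAt_of_contDiffOn hf hB hp
    rw [extD_smul hfp.exp (differentiableAt_of_contDiffOn hθ hB hp),
      differential_comp Real.differentiableAt_exp hfp, Real.deriv_exp, hdf p hp, smul_add,
      wedge, wedge, smul_sub, smul_vecMulVec, vecMulVec_smul]
  refine
    { contDiffOn_n := contDiffOn_differential hv hB
      contDiffOn_la := hf.exp.smul hC.contDiffOn_la
      contDiffOn_ε := hC.contDiffOn_ε
      contDiffOn_a := contDiffOn_const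
      contDiffOn_b := hf.exp.smul hC.contDiffOn_b
      metric_eq := fun p hp => ?_
      extD_n := fun p hp => ?_
      extD_la := fun p hp => ?_
      extD_ε := fun p hp => ?_
      extD_a := fun _ _ => ?_
      extD_b := fun p hp => ?_ }
  · rw [hC.metric_eq p hp, hn p hp]
    simp only [smul_vecMulVec, vecMulVec_smul]
  · rw [extD_differential hv hB hp, Pi.zero_apply, wedge, zero_vecMulVec, vecMulVec_zero, sub_zero]
  · rw [extD_boost hC.contDiffOn_la hp, hC.extD_la p hp]
    ext i j
    simp only [wedge_apply, Matrix.add_apply, Matrix.sub_apply, Matrix.neg_apply,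
      Matrix.smul_apply, Pi.smul_apply, Pi.zero_apply, smul_eq_mul]
    ring
  · rw [hC.extD_ε p hp, hn p hp]
    simp only [wedge, smul_vecMulVec, vecMulVec_smul]
  · ext i j
    exact sub_eq_zero.2 ((pd_const 0 i).trans (pd_const 0 j).symm)
  · rw [extD_boost hC.contDiffOn_b hp, hC.extD_b p hp, hn p hp]
    ext i j
    simp only [wedge_apply, Matrix.add_apply, Matrix.sub_apply, Matrix.smul_apply,
      Pi.smul_apply, Pi.zero_apply, smul_eq_mul]
    ring

/-- Rescaling the lightlike leg by `e⁻ᶠ`, where `df = a`, makes it parallel. -/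
theorem IsNullCoframe.exists_boost {g : Pt 3 → Fin 3 → Fin 3 → ℝ} {B : Set (Pt 3)}
    {n la ε a b : Pt 3 → Fin 3 → ℝ} {ν : Pt 3 → ℝ} (hC : IsNullCoframe g B n la ε a b ν)
    (hB : IsOpen B) (hBc : Convex ℝ B) :
    ∃ f v : Pt 3 → ℝ, ContDiffOn ℝ ∞ f B ∧ ContDiffOn ℝ ∞ v B ∧
      (∀ p ∈ B, differential f p = a p) ∧
      ∀ p ∈ B, n p = Real.exp (f p) • differential v p := by
  obtain ⟨f, hf, hdf⟩ := exists_differential_eq_of_extD_eq_zero hB hBc hC.contDiffOn_a hC.extD_a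
  have hθ : ContDiffOn ℝ ∞ (fun q => (Real.exp (f q))⁻¹ • n q) B :=
    (hf.exp.inv fun q _ => Real.exp_ne_zero _).smul hC.contDiffOn_n
  have hclosed (p) (hp : p ∈ B) : extD (fun q => (Real.exp (f q))⁻¹ • n q) p = 0 := by
    have hfp := differentiableAt_of_contDiffOn hf hB hp
    have hdexp : differential (fun q => (Real.exp (f q))⁻¹) p = -(Real.exp (f p))⁻¹ • a p := by
      simp only [← Real.exp_neg]
      rw [differential_comp (φ := fun t => Real.exp (-t)) (by fun_prop) hfp, hdf p hp]
      congr 1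
      simpa using (hasDerivAt_neg (f p)).exp.deriv
    rw [extD_smul (hfp.exp.fun_inv (Real.exp_ne_zero _))
      (differentiableAt_of_contDiffOn hC.contDiffOn_n hB hp), hdexp, hC.extD_n p hp]
    ext i j
    simp only [wedge_apply, Matrix.add_apply, Matrix.smul_apply, Pi.smul_apply, smul_eq_mul,
      Matrix.zero_apply]
    ring
  obtain ⟨v, hv, hdv⟩ := exists_differential_eq_of_extD_eq_zero hB hBc hθ hclosed
  exact ⟨f, v, hf, hv, hdf, fun p hp => by
    rw [hdv p hp, smul_inv_smul₀ (Real.exp_ne_zero _)]⟩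

lemma differential_comp_mul_sub {n : ℕ} {v w w' : Pt n → ℝ} {p : Pt n} {φ ψ : ℝ → ℝ} {φ' ψ' : ℝ}
    (hφ : HasDerivAt φ φ' (v p)) (hψ : HasDerivAt ψ ψ' (v p)) (hv : DifferentiableAt ℝ v p)
    (hw : DifferentiableAt ℝ w p) (hw' : DifferentiableAt ℝ w' p) :
    differential (fun q => φ (v q) * w q - ψ (v q) * w' q) p =
      (φ' * w p - ψ' * w' p) • differential v p +
        (φ (v p) • differential w p - ψ (v p) • differential w' p) := by
  have hφv : DifferentiableAt ℝ (fun q => φ (v q)) p := hφ.differentiableAt.comp p hv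
  have hψv : DifferentiableAt ℝ (fun q => ψ (v q)) p := hψ.differentiableAt.comp p hv
  rw [differential_sub (hφv.fun_mul hw) (hψv.fun_mul hw'), differential_mul hφv hw,
    differential_mul hψv hw', differential_comp hφ.differentiableAt hv,
    differential_comp hψ.differentiableAt hv, hφ.deriv, hψ.deriv]
  module

/-- The metric `2 du dv + K(v) x² dv² + dx²` in the coordinates `(u, v, x) = (q 0, q 1, q 2)`. -/
def profileMetric (K : ℝ → ℝ) (q : Pt 3) : Matrix (Fin 3) (Fin 3) ℝ :=
  !![0, 1, 0; 1, K (q 1) * q 2 ^ 2, 0; 0, 0, 1]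

lemma planeWaveM_eq_profileMetric (α : ℝ → ℝ) (q : Pt 3) :
    planeWaveM α q = profileMetric (fun t => -(deriv (deriv α) t / α t)) q := by
  ext i j
  fin_cases i <;> fin_cases j <;> simp [planeWaveM, profileMetric]

/-- A null coframe `(dv, la, ε)` with parallel first leg `dv`, normal connection form `b` and
Ricci tensor `-K(v) dv²`, where `v` takes its values in the open set `I` on which `K` is smooth. -/
structure IsParallelNullCoframe (g : Pt 3 → Fin 3 → Fin 3 → ℝ) (B : Set (Pt 3)) (v : Pt 3 → ℝ)
    (la ε b : Pt 3 → Fin 3 → ℝ) (K : ℝ → ℝ) (I : Set ℝ) : Prop where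
  isNullCoframe : IsNullCoframe g B (differential v) la ε 0 b fun q => -K (v q)
  contDiffOn_v : ContDiffOn ℝ ∞ v B
  mapsTo : Set.MapsTo v B I
  isOpen : IsOpen I
  contDiffOn_K : ContDiffOn ℝ ∞ K I

namespace IsParallelNullCoframe

variable {g : Pt 3 → Fin 3 → Fin 3 → ℝ} {B : Set (Pt 3)} {v : Pt 3 → ℝ}
  {la ε b : Pt 3 → Fin 3 → ℝ} {K : ℝ → ℝ} {I : Set ℝ}

lemma mono (hC : IsParallelNullCoframe g B v la ε b K I) {B' : Set (Pt 3)} {I' : Set ℝ}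
    (hB' : B' ⊆ B) (hI' : I' ⊆ I) (hI'o : IsOpen I') (hv : Set.MapsTo v B' I') :
    IsParallelNullCoframe g B' v la ε b K I' where
  isNullCoframe := hC.isNullCoframe.mono hB'
  contDiffOn_v := hC.contDiffOn_v.mono hB'
  mapsTo := hv
  isOpen := hI'o
  contDiffOn_K := hC.contDiffOn_K.mono hI'

theorem exists_differential_eq_of_solvesJacobi (hC : IsParallelNullCoframe g B v la ε b K I)
    (hB : IsOpen B) (hBc : Convex ℝ B) {y z : ℝ → ℝ} (hyz : SolvesJacobi K y z I) :
    ∃ w : Pt 3 → ℝ, ContDiffOn ℝ ∞ w B ∧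
      ∀ p ∈ B, differential w p = z (v p) • ε p + y (v p) • b p := by
  have hN := hC.isNullCoframe
  obtain ⟨hy, hz⟩ := hyz.contDiffOn hC.isOpen hC.contDiffOn_K
  have hYv := hy.comp hC.contDiffOn_v hC.mapsTo
  have hZv := hz.comp hC.contDiffOn_v hC.mapsTo
  have hθ : ContDiffOn ℝ ∞ (fun p => z (v p) • ε p + y (v p) • b p) B :=
    (hZv.smul hN.contDiffOn_ε).add (hYv.smul hN.contDiffOn_b)
  refine exists_differential_eq_of_extD_eq_zero hB hBc hθ fun p hp => ?_
  have hvp := differentiableAt_of_contDiffOn hC.contDiffOn_v hB hp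
  have hεp := differentiableAt_of_contDiffOn hN.contDiffOn_ε hB hp
  have hbp := differentiableAt_of_contDiffOn hN.contDiffOn_b hB hp
  obtain ⟨hy', hz'⟩ := hyz (v p) (hC.mapsTo hp)
  have hYp : DifferentiableAt ℝ (fun q => y (v q)) p := hy'.differentiableAt.comp p hvp
  have hZp : DifferentiableAt ℝ (fun q => z (v q)) p := hz'.differentiableAt.comp p hvp
  rw [extD_add (hZp.fun_smul hεp) (hYp.fun_smul hbp), extD_smul hZp hεp, extD_smul hYp hbp,
    differential_comp hy'.differentiableAt hvp, differential_comp hz'.differentiableAt hvp,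
    hy'.deriv, hz'.deriv, hN.extD_ε p hp, hN.extD_b p hp]
  ext i j
  simp only [wedge_apply, Matrix.add_apply, Matrix.sub_apply, Matrix.smul_apply, Pi.smul_apply,
    Pi.zero_apply, smul_eq_mul, Matrix.zero_apply]
  ring

/-- The coordinate `x` and its slope `s`: variation of constants in the Jacobi equation. -/
theorem exists_transverse (hC : IsParallelNullCoframe g B v la ε b K I)
    (hB : IsOpen B) (hBc : Convex ℝ B) {y₁ z₁ y₂ z₂ : ℝ → ℝ} (h₁ : SolvesJacobi K y₁ z₁ I)
    (h₂ : SolvesJacobi K y₂ z₂ I) (hW : ∀ t ∈ I, y₁ t * z₂ t - y₂ t * z₁ t = 1) :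
    ∃ x s : Pt 3 → ℝ, ContDiffOn ℝ ∞ x B ∧ ContDiffOn ℝ ∞ s B ∧
      (∀ p ∈ B, differential x p = ε p + s p • differential v p) ∧
      ∀ p ∈ B, differential s p = (K (v p) * x p) • differential v p - b p := by
  obtain ⟨w₁, hw₁, hdw₁⟩ := hC.exists_differential_eq_of_solvesJacobi hB hBc h₁
  obtain ⟨w₂, hw₂, hdw₂⟩ := hC.exists_differential_eq_of_solvesJacobi hB hBc h₂
  have hcomp {y z : ℝ → ℝ} (hyz : SolvesJacobi K y z I) :
      ContDiffOn ℝ ∞ (fun q => y (v q)) B ∧ ContDiffOn ℝ ∞ (fun q => z (v q)) B :=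
    (hyz.contDiffOn hC.isOpen hC.contDiffOn_K).imp (·.comp hC.contDiffOn_v hC.mapsTo)
      (·.comp hC.contDiffOn_v hC.mapsTo)
  have hd {φ ψ : ℝ → ℝ} {φ' ψ' : ℝ} {p} (hp : p ∈ B) (hφ : HasDerivAt φ φ' (v p))
      (hψ : HasDerivAt ψ ψ' (v p)) :=
    differential_comp_mul_sub hφ hψ (differentiableAt_of_contDiffOn hC.contDiffOn_v hB hp)
      (differentiableAt_of_contDiffOn hw₂ hB hp) (differentiableAt_of_contDiffOn hw₁ hB hp)
  refine ⟨fun q => y₁ (v q) * w₂ q - y₂ (v q) * w₁ q, fun q => z₁ (v q) * w₂ q - z₂ (v q) * w₁ q,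
    ((hcomp h₁).1.mul hw₂).sub ((hcomp h₂).1.mul hw₁),
    ((hcomp h₁).2.mul hw₂).sub ((hcomp h₂).2.mul hw₁), fun p hp => ?_, fun p hp => ?_⟩ <;>
  have hWp := hW (v p) (hC.mapsTo hp)
  · rw [hd hp (h₁ _ (hC.mapsTo hp)).1 (h₂ _ (hC.mapsTo hp)).1, hdw₁ p hp, hdw₂ p hp]
    linear_combination (norm := module) hWp • ε p
  · rw [hd hp (h₁ _ (hC.mapsTo hp)).2 (h₂ _ (hC.mapsTo hp)).2, hdw₁ p hp, hdw₂ p hp]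
    linear_combination (norm := module) -hWp • b p

theorem exists_longitudinal (hC : IsParallelNullCoframe g B v la ε b K I)
    (hB : IsOpen B) (hBc : Convex ℝ B) {x s : Pt 3 → ℝ} (hx : ContDiffOn ℝ ∞ x B)
    (hs : ContDiffOn ℝ ∞ s B)
    (hdx : ∀ p ∈ B, differential x p = ε p + s p • differential v p)
    (hds : ∀ p ∈ B, differential s p = (K (v p) * x p) • differential v p - b p) :
    ∃ u : Pt 3 → ℝ, ContDiffOn ℝ ∞ u B ∧ ∀ p ∈ B, differential u p =
      la p - s p • ε p - (1 / 2 * (s p * s p + K (v p) * (x p * x p))) • differential v p := by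
  have hN := hC.isNullCoframe
  have hKv : ContDiffOn ℝ ∞ (fun q => K (v q)) B := hC.contDiffOn_K.comp hC.contDiffOn_v hC.mapsTo
  have hQ : ContDiffOn ℝ ∞ (fun q => 1 / 2 * (s q * s q + K (v q) * (x q * x q))) B :=
    contDiffOn_const.mul ((hs.mul hs).add (hKv.mul (hx.mul hx)))
  refine exists_differential_eq_of_extD_eq_zero hB hBc ((hN.contDiffOn_la.sub
    (hs.smul hN.contDiffOn_ε)).sub (hQ.smul hN.contDiffOn_n)) fun p hp => ?_
  have hvp := differentiableAt_of_contDiffOn hC.contDiffOn_v hB hp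
  have hsp := differentiableAt_of_contDiffOn hs hB hp
  have hxp := differentiableAt_of_contDiffOn hx hB hp
  have hKp := (hC.contDiffOn_K.contDiffAt (hC.isOpen.mem_nhds (hC.mapsTo hp))).differentiableAt
    (by simp)
  have := differentiableAt_of_contDiffOn hKv hB hp
  have hlap := differentiableAt_of_contDiffOn hN.contDiffOn_la hB hp
  have hεp := differentiableAt_of_contDiffOn hN.contDiffOn_ε hB hp
  have hnp := differentiableAt_of_contDiffOn hN.contDiffOn_n hB hp
  have hQp := differentiableAt_of_contDiffOn hQ hB hp
  have hdQ : differential (fun q => 1 / 2 * (s q * s q + K (v q) * (x q * x q))) p =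
      s p • differential s p + (K (v p) * x p) • differential x p +
        (1 / 2 * deriv K (v p) * x p ^ 2) • differential v p := by
    ext i
    have hKi := pd_comp hKp hvp i
    simp (disch := fun_prop) only [differential, pd_add, pd_mul, pd_const, hKi, Pi.add_apply,
      Pi.smul_apply, smul_eq_mul]
    ring
  rw [extD_sub (hlap.fun_sub (hsp.fun_smul hεp)) (hQp.fun_smul hnp),
    extD_sub hlap (hsp.fun_smul hεp), extD_smul hsp hεp, extD_smul hQp hnp, hdQ, hdx p hp,
    hds p hp, hN.extD_la p hp, hN.extD_ε p hp, hN.extD_n p hp]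
  ext i j
  simp only [wedge_apply, Matrix.add_apply, Matrix.sub_apply, Matrix.neg_apply, Matrix.smul_apply,
    Pi.add_apply, Pi.sub_apply, Pi.smul_apply, Pi.zero_apply, smul_eq_mul, Matrix.zero_apply]
  ring

theorem exists_convex_nhds_coordinates (hC : IsParallelNullCoframe g B v la ε b K I)
    (hB : IsOpen B) {p : Pt 3} (hp : p ∈ B) :
    ∃ (W : Set (Pt 3)) (u x s : Pt 3 → ℝ), IsOpen W ∧ p ∈ W ∧ W ⊆ B ∧ ContDiffOn ℝ ∞ u W ∧
      ContDiffOn ℝ ∞ x W ∧ ∀ q ∈ W, differential x q = ε q + s q • differential v q ∧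
        differential u q = la q - s q • ε q -
          (1 / 2 * (s q * s q + K (v q) * (x q * x q))) • differential v q := by
  obtain ⟨I', hI'I, hI', hvI', y₁, z₁, y₂, z₂, h₁, h₂, hwronskian⟩ :=
    exists_fundamental_solvesJacobi hC.contDiffOn_K hC.isOpen (hC.mapsTo hp)
  obtain ⟨r, hr, hball⟩ := Metric.isOpen_iff.1
    (hC.contDiffOn_v.continuousOn.isOpen_inter_preimage hB hI') p ⟨hp, hvI'⟩
  have hWB : Metric.ball p r ⊆ B := fun q hq => (hball hq).1
  have hW : IsOpen (Metric.ball p r) := Metric.isOpen_ball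
  have hWc : Convex ℝ (Metric.ball p r) := convex_ball p r
  have hCW := hC.mono hWB hI'I hI' fun q hq => (hball hq).2
  obtain ⟨x, s, hx, hs, hdx, hds⟩ := hCW.exists_transverse hW hWc h₁ h₂ hwronskian
  obtain ⟨u, hu, hdu⟩ := hCW.exists_longitudinal hW hWc hx hs hdx hds
  exact ⟨_, u, x, s, hW, Metric.mem_ball_self hr, hWB, hu, hx,
    fun q hq => ⟨hdx q hq, hdu q hq⟩⟩

lemma metric_eq_of_differential (hC : IsParallelNullCoframe g B v la ε b K I) {p : Pt 3}
    (hp : p ∈ B) {u x : Pt 3 → ℝ} {s : ℝ} (hdx : differential x p = ε p + s • differential v p)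
    (hdu : differential u p =
      la p - s • ε p - (1 / 2 * (s * s + K (v p) * (x p * x p))) • differential v p) :
    Matrix.of (g p) = (jac (fun q => ![u q, v q, x q]) p)ᵀ *
      profileMetric K ![u p, v p, x p] * jac (fun q => ![u q, v q, x q]) p := by
  have hjac : jac (fun q => ![u q, v q, x q]) p =
      Matrix.of ![differential u p, differential v p, differential x p] := by
    ext i j
    fin_cases i <;> rfl
  rw [hC.isNullCoframe.metric_eq p hp, hjac, hdx, hdu]
  ext i j
  simp only [Matrix.add_apply, vecMulVec_apply, profileMetric, cons_val_one, cons_val_zero,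
    cons_val, Matrix.mul_apply, transpose_apply, of_apply, cons_val', Pi.sub_apply, Pi.smul_apply,
    smul_eq_mul, Pi.add_apply, cons_val_fin_one, Fin.sum_univ_three]
  ring

theorem exists_chart (hC : IsParallelNullCoframe g B v la ε b K I) (hB : IsOpen B) {p : Pt 3}
    (hp : p ∈ B) (hdet : (Matrix.of (g p)).det ≠ 0) :
    ∃ (U : Set (Pt 3)) (ψ : Pt 3 → Pt 3), IsOpen U ∧ ContDiffOn ℝ ∞ ψ U ∧ Set.InjOn ψ U ∧
      ψ '' U ⊆ B ∧ p ∈ ψ '' U ∧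
      ∀ q ∈ U, pullback g ψ q = profileMetric K q ∧ v (ψ q) = q 1 := by
  obtain ⟨W, u, x, s, hW, hpW, hWB, hu, hx, hd⟩ := hC.exists_convex_nhds_coordinates hB hp
  let Ξ (q : Pt 3) : Pt 3 := ![u q, v q, x q]
  have hΞ : ContDiffOn ℝ ∞ Ξ W := contDiffOn_pi.2 fun i => by
    fin_cases i
    exacts [hu, hC.contDiffOn_v.mono hWB, hx]
  have hg (q) (hq : q ∈ W) : Matrix.of (g q) = (jac Ξ q)ᵀ * profileMetric K (Ξ q) * jac Ξ q :=
    hC.metric_eq_of_differential (hWB hq) (hd q hq).1 (hd q hq).2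
  have hjac : (jac Ξ p).det ≠ 0 := fun h0 => hdet <| by
    rw [hg p hpW, Matrix.det_mul, h0, mul_zero]
  obtain ⟨S, hSΞ, hpS, hSW, hsymm⟩ :=
    exists_openPartialHomeomorph_of_det_jac_ne_zero hΞ hW hpW hjac
  refine ⟨S.target, S.symm, S.open_target, hsymm, S.symm.injOn, ?_, ?_, fun q hq => ?_⟩
  · exact (S.symm_image_target_eq_source).trans_subset (hSW.trans hWB)
  · exact S.symm_image_target_eq_source.symm ▸ hpS
  have hqW := hSW (S.map_target hq)
  have hright : Ξ (S.symm q) = q := hSΞ ▸ S.right_inv hq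
  refine ⟨pullback_symm hq (hSΞ ▸ differentiableAt_of_contDiffOn hΞ hW hqW)
    (differentiableAt_of_contDiffOn hsymm S.open_target hq) ?_, congrFun hright 1⟩
  rw [hSΞ, hg _ hqW, hright]

end IsParallelNullCoframe

lemma deriv_eq_of_differential_eq_smul {n : ℕ} {α : ℝ → ℝ} {h v : Pt n → ℝ} {W : Set (Pt n)}
    {p : Pt n} (hW : IsOpen W) (hp : p ∈ W) (hhα : Set.EqOn h (fun q => α (v q)) W)
    (hα : DifferentiableAt ℝ α (v p)) (hv : DifferentiableAt ℝ v p) (hdv : differential v p ≠ 0)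
    {c : ℝ} (hdh : differential h p = c • differential v p) : deriv α (v p) = c := by
  rw [differential_congr_of_eqOn hW hhα hp, differential_comp hα hv] at hdh
  exact smul_left_injective ℝ hdv hdh

namespace IsIsotropicTwoStep

variable {D : Set (Pt 3)} {g : Pt 3 → Fin 3 → Fin 3 → ℝ} {h Λ : Pt 3 → ℝ} {p : Pt 3}

theorem exists_isNullCoframe_differential (hs : IsIsotropicTwoStep g h Λ D) (hD : IsOpen D)
    (hp : p ∈ D) :
    ∃ (B : Set (Pt 3)) (v c κ : Pt 3 → ℝ) (la ε b : Pt 3 → Fin 3 → ℝ),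
      IsOpen B ∧ p ∈ B ∧ B ⊆ D ∧ ContDiffOn ℝ ∞ v B ∧
      IsNullCoframe g B (differential v) la ε 0 b (fun q => κ q / h q) ∧
      ∀ q ∈ B, differential h q = c q • differential v q ∧
        differential c q = κ q • differential v q ∧ (κ q = 0 ↔ RicOpM g q = 0) := by
  obtain ⟨B, la, ε, b, μ, hB, hBc, hpB, hBD, hC, hRic⟩ := hs.exists_isNullCoframe hD hp
  obtain ⟨f, v, hf, hv, hdf, hn⟩ := hC.exists_boost hB hBc
  have hboost := hC.boost hB hf hv hdf hn
  simp only [← mul_div_assoc] at hboost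
  refine ⟨B, v, fun q => Real.exp (f q), fun q => Real.exp (f q) ^ 2 * μ q, _, _, _, hB, hpB, hBD,
    hv, hboost, fun q hq => ⟨?_, ?_, ?_⟩⟩
  · rw [← hs.isMetricOn.lower_gradV (hBD hq), hn q hq]
  · rw [differential_comp Real.differentiableAt_exp (differentiableAt_of_contDiffOn hf hB hq),
      Real.deriv_exp, hdf q hq, hn q hq]
    module
  · rw [hRic q hq, mul_eq_zero, or_iff_right (pow_ne_zero 2 (Real.exp_ne_zero _))]

theorem exists_isParallelNullCoframe (hs : IsIsotropicTwoStep g h Λ D) (hD : IsOpen D)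
    (hp : p ∈ D) :
    ∃ (W : Set (Pt 3)) (v : Pt 3 → ℝ) (la ε b : Pt 3 → Fin 3 → ℝ) (α : ℝ → ℝ),
      IsOpen W ∧ p ∈ W ∧ W ⊆ D ∧ ContDiff ℝ ∞ α ∧
      (∀ q ∈ W, h q = α (v q) ∧ (deriv (deriv α) (v q) = 0 ↔ RicOpM g q = 0)) ∧
      IsParallelNullCoframe g W v la ε b (fun t => -(deriv (deriv α) t / α t))
        {t | α t ≠ 0} := by
  obtain ⟨B, v, c, κ, la, ε, b, hB, hpB, hBD, hv, hC, hd⟩ :=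
    hs.exists_isNullCoframe_differential hD hp
  have hdv (q) (hq : q ∈ B) : differential v q ≠ 0 := fun h0 =>
    hs.differential_density_ne_zero (hBD hq) (by rw [(hd q hq).1, h0, smul_zero])
  have hfv : fderiv ℝ v p ≠ 0 := fun h0 => hdv p hpB <| funext fun i => congr($h0 (Pi.single i 1))
  obtain ⟨α, hα, hhα⟩ := exists_eventuallyEq_comp_of_fderiv_eq_smul
    (hs.contDiffOn_density.mono hBD) hv hB hpB
    (fun q hq => (fderiv_eq_smul_iff_differential _).2 (hd q hq).1) hfv
  obtain ⟨W, hWh, hW, hpW⟩ := eventually_nhds_iff.1 (hhα.and (hB.mem_nhds hpB))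
  have hWB : W ⊆ B := fun q hq => (hWh q hq).2
  have hα' : ContDiff ℝ ∞ (deriv α) := (contDiff_infty_iff_deriv.1 hα).2
  have hα'' : ContDiff ℝ ∞ (deriv (deriv α)) := (contDiff_infty_iff_deriv.1 hα').2
  have hc : Set.EqOn c (fun q => deriv α (v q)) W := fun q hq =>
    (deriv_eq_of_differential_eq_smul hW hq (fun r hr => (hWh r hr).1)
      (hα.differentiable (by simp) _) (differentiableAt_of_contDiffOn hv hB (hWB hq))
      (hdv q (hWB hq)) (hd q (hWB hq)).1).symm
  have hκ (q) (hq : q ∈ W) : deriv (deriv α) (v q) = κ q :=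
    deriv_eq_of_differential_eq_smul hW hq hc (hα'.differentiable (by simp) _)
      (differentiableAt_of_contDiffOn hv hB (hWB hq)) (hdv q (hWB hq)) (hd q (hWB hq)).2.1
  refine ⟨W, v, la, ε, b, α, hW, hpW, hWB.trans hBD, hα,
    fun q hq => ⟨(hWh q hq).1, hκ q hq ▸ (hd q (hWB hq)).2.2⟩,
    { isNullCoframe := { hC.mono hWB with
        extD_b := fun q hq => ?_ }
      contDiffOn_v := hv.mono hWB
      mapsTo := fun q hq => (hWh q hq).1.symm.trans_ne <| hs.density_ne_zero q (hBD (hWB hq))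
      isOpen := isOpen_ne_fun hα.continuous continuous_const
      contDiffOn_K := (hα''.contDiffOn.div hα.contDiffOn fun _ ht => ht).neg }⟩
  rw [hC.extD_b q (hWB hq), neg_neg, hκ q hq, (hWh q hq).1]

end IsIsotropicTwoStep

end PlaneWaveCoordinates

theorem isotropic_two_step_is_plane_wave_general {D : Set (Pt 3)}
    {g : Pt 3 → Fin 3 → Fin 3 → ℝ} {h Λ : Pt 3 → ℝ} (hD : IsOpen D)
    (hs : IsIsotropicTwoStep g h Λ D) :
    ∀ p ∈ D, ∃ (U : Set (Pt 3)) (ψ : Pt 3 → Pt 3) (α : ℝ → ℝ),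
      IsOpen U ∧ ContDiffOn ℝ ∞ ψ U ∧ Set.InjOn ψ U ∧ ψ '' U ⊆ D ∧
      p ∈ ψ '' U ∧ ContDiff ℝ ∞ α ∧
      ∀ q ∈ U, pullback g ψ q = planeWaveM α q ∧ h (ψ q) = α (q 1) ∧
        (deriv (deriv α) (q 1) = 0 ↔ RicOpM g (ψ q) = 0) := by
  intro p hp
  obtain ⟨W, v, la, ε, b, α, hW, hpW, hWD, hα, hhα, hC⟩ := hs.exists_isParallelNullCoframe hD hp
  obtain ⟨U, ψ, hU, hψ, hinj, hUW, hpU, hchart⟩ :=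
    hC.exists_chart hW hpW (hs.isMetricOn.det_ne_zero p hp)
  refine ⟨U, ψ, α, hU, hψ, hinj, hUW.trans hWD, hpU, hα, fun q hq => ?_⟩
  obtain ⟨hpull, hv⟩ := hchart q hq
  have hq' := hhα (ψ q) (hUW ⟨q, hq, rfl⟩)
  rw [hv] at hq'
  exact ⟨hpull.trans (planeWaveM_eq_profileMetric α q).symm, hq'⟩

/-- A non-flat 3-dimensional isotropic solution (written in an
arbitrary coordinate chart `D ⊆ ℝ³`) of the vacuum weighted Einstein field
equation whose Ricci operator is 2-step nilpotent is a plane wave: around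
each point there are local coordinates `(u,v,x) = (q 0, q 1, q 2)` in which
the metric is `dv(2du − (α''(v)/α(v))x² dv) + dx²` and `h = α(v)` with
`α'' ≠ 0`. -/
theorem isotropic_two_step_is_plane_wave
    (D : Set (Pt 3)) (hD : IsOpen D)
    (g : Pt 3 → Fin 3 → Fin 3 → ℝ) (h : Pt 3 → ℝ) (Λ : ℝ)
    (hgsm : ∀ i j, ContDiffOn ℝ (⊤ : ℕ∞) (fun p => g p i j) D)
    (hlor : ∀ p ∈ D, IsLorentz3 (Matrix.of (g p)))
    (hhsm : ContDiffOn ℝ (⊤ : ℕ∞) h D)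
    (hpos : ∀ p ∈ D, 0 < h p)
    (hsol : ∀ p ∈ D, WEFEat g h Λ p)
    (hlight : ∀ p ∈ D, gradNorm2 g h p = 0 ∧ gradV g h p ≠ 0)
    (hnonflat : ∀ p ∈ D, RicOpM g p ≠ 0)
    (hnil2 : ∀ p ∈ D, RicOpM g p ^ 2 = 0) :
    ∀ p ∈ D, ∃ (U : Set (Pt 3)) (ψ : Pt 3 → Pt 3) (α : ℝ → ℝ),
      IsOpen U ∧ ContDiffOn ℝ (⊤ : ℕ∞) ψ U ∧ Set.InjOn ψ U ∧ ψ '' U ⊆ D ∧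
      p ∈ ψ '' U ∧ ContDiff ℝ (⊤ : ℕ∞) α ∧
      ∀ q ∈ U, pullback g ψ q = planeWaveM α q ∧ h (ψ q) = α (q 1) ∧
        deriv (deriv α) (q 1) ≠ 0 := by
  intro p hp
  have hs : IsIsotropicTwoStep g h (fun _ => Λ) D :=
    ⟨hgsm, hlor, hhsm, fun q hq => (hpos q hq).ne', hsol, fun q hq => (hlight q hq).1,
      fun q hq => (hlight q hq).2, hnil2⟩
  obtain ⟨U, ψ, α, hU, hψ, hinj, hUD, hpU, hα, hchart⟩ :=
    isotropic_two_step_is_plane_wave_general hD hs p hp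
  refine ⟨U, ψ, α, hU, hψ, hinj, hUD, hpU, hα, fun q hq => ?_⟩
  obtain ⟨hpull, hh, hα''⟩ := hchart q hq
  exact ⟨hpull, hh, fun h0 => hnonflat _ (hUD ⟨q, hq, rfl⟩) (hα''.1 h0)⟩
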